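/- arXiv:2405.05664 — 2 statements merged into one kernel-verified Lean document; each statement's English description precedes it below -/
import Mathlib

section
/- (Leibniz rule for BV functions.) Let $I \subseteq \mathbb{R}$ be an interval, and let $BV(I)$ be the set of (classes modulo a.e. equality of) functions $u \in L^1(I)$ whose distributional derivative $u'$ on the interior $\mathring I$ of $I$ is a finite signed Radon measure on $\mathring I$, i.e. $\int_I u\,\varphi'\,dx = -\int \varphi\,du'$ for all $\varphi \in C_c^\infty(\mathring I)$. Every $u \in BV(I)$ admits one-sided limits $u(x-)$ and $u(x+)$ at every $x \in \mathring I$ (taken up to Lebesgue null sets, hence independent of the representative); put $\langle u\rangle(x) := \tfrac12\bigl(u(x-)+u(x+)\bigr)$. Let $u, v \in BV(I)$. Then $uv \in BV(I)$, the function $\langle v\rangle$ is $|u'|$-integrable, $\langle u\rangle$ is $|v'|$-integrable, and, as signed Radon measures on $\mathring I$, $$(uv)' = \langle v\rangle\, u' + \langle u\rangle\, v',$$ where $f\mu$ denotes the measure $E \mapsto \int_E f\,d\mu$. -/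
open Set MeasureTheory Filter Topology
open scoped ContDiff

/-- The signed measure `μ` is the distributional derivative on the interval `I` of (the class of)
`u`: `∫_I u φ' dx = - ∫ φ dμ` for all smooth `φ` with compact support in the interior of `I`.
A signed measure on the interior of `I` is represented by its extension by zero to `ℝ`, which is
what the first conjunct says; it makes `μ` unique. (Finite signed Borel measures on an open subset
of `ℝ` are automatically Radon.) -/
def IsDistribDeriv (I : Set ℝ) (u : ℝ → ℝ) (μ : SignedMeasure ℝ) : Prop :=
  (∀ E : Set ℝ, MeasurableSet E → Disjoint E (interior I) → μ E = 0) ∧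
  ∀ φ : ℝ → ℝ, ContDiff ℝ ∞ φ → HasCompactSupport φ → tsupport φ ⊆ interior I →
    ∫ x in I, u x * deriv φ x = - VectorMeasure.integral μ φ (ContinuousLinearMap.lsmul ℝ ℝ)

/-- `u ∈ BV(I)`: `u ∈ L¹(I)` and its distributional derivative is a finite signed measure. -/
def MemBV (I : Set ℝ) (u : ℝ → ℝ) : Prop :=
  IntegrableOn u I ∧ ∃ μ : SignedMeasure ℝ, IsDistribDeriv I u μ

/-- The limit of `u(y)` as `y → x` within `s`, up to Lebesgue null sets: it depends only on the
class of `u` modulo equality almost everywhere on `s`. -/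
noncomputable def essLimWithin (s : Set ℝ) (u : ℝ → ℝ) (x : ℝ) : ℝ :=
  limUnder (𝓝[s] x ⊓ ae volume) u

open Classical in
/-- `u(x-)`, taken inside `I`. At the left endpoint of `I`, where there is nothing to the left,
it is the limit from the right. -/
noncomputable def bvLeftLim (I : Set ℝ) (u : ℝ → ℝ) (x : ℝ) : ℝ :=
  if ∃ y ∈ I, y < x then essLimWithin (I ∩ Iio x) u x else essLimWithin (I ∩ Ioi x) u x

open Classical in
/-- `u(x+)`, taken inside `I`. At the right endpoint of `I`, where there is nothing to the right,
it is the limit from the left. -/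
noncomputable def bvRightLim (I : Set ℝ) (u : ℝ → ℝ) (x : ℝ) : ℝ :=
  if ∃ y ∈ I, x < y then essLimWithin (I ∩ Ioi x) u x else essLimWithin (I ∩ Iio x) u x

/-- The precise representative `⟨u⟩(x) = (u(x-) + u(x+)) / 2`. -/
noncomputable def preciseRep (I : Set ℝ) (u : ℝ → ℝ) (x : ℝ) : ℝ :=
  (bvLeftLim I u x + bvRightLim I u x) / 2

/-- The signed measure `f μ : E ↦ ∫_E f dμ`, for `f` integrable with respect to `|μ|`. -/
noncomputable def densityMul (f : ℝ → ℝ) (μ : SignedMeasure ℝ) : SignedMeasure ℝ :=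
  VectorMeasure.withDensity μ f (ContinuousLinearMap.lsmul ℝ ℝ)

instance MeasureTheory.SignedMeasure.isFiniteMeasure_variation (μ : SignedMeasure ℝ) :
    IsFiniteMeasure μ.variation := by
  rw [← SignedMeasure.totalVariation_eq_variation]
  unfold SignedMeasure.totalVariation
  infer_instance

theorem integral_toSignedMeasure_lsmul (m : Measure ℝ) [IsFiniteMeasure m] (f : ℝ → ℝ) :
    VectorMeasure.integral m.toSignedMeasure f (ContinuousLinearMap.lsmul ℝ ℝ) = ∫ x, f x ∂m := by
  have hflip : (ContinuousLinearMap.lsmul ℝ ℝ : ℝ →L[ℝ] ℝ →L[ℝ] ℝ) =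
      (ContinuousLinearMap.lsmul ℝ ℝ).flip := by
    ext; simp
  rw [hflip, VectorMeasure.integral_toSignedMeasure]

/-- Polar decomposition of a signed measure: integration against `μ` is integration against
`|μ|` with a measurable density of modulus one. -/
theorem MeasureTheory.SignedMeasure.exists_polar (μ : SignedMeasure ℝ) :
    ∃ h : ℝ → ℝ, Measurable h ∧ (∀ x, ‖h x‖ ≤ 1) ∧
      ∀ f : ℝ → ℝ, VectorMeasure.Integrable μ f →
        VectorMeasure.integral μ f (ContinuousLinearMap.lsmul ℝ ℝ) =
          ∫ x, f x * h x ∂μ.variation := by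
  classical
  obtain ⟨i, hi, hpos, hneg, hP, hN⟩ := μ.toJordanDecomposition_spec
  refine ⟨fun x => if x ∈ i then 1 else -1, Measurable.ite hi measurable_const measurable_const, ?_, ?_⟩
  · intro x; by_cases hx : x ∈ i <;> simp [hx]
  intro f hf
  set P := μ.toJordanDecomposition.posPart with hPdef
  set N := μ.toJordanDecomposition.negPart with hNdef
  have hvar : μ.variation = P + N := by
    rw [← SignedMeasure.totalVariation_eq_variation]; rfl
  have hμ : μ = P.toSignedMeasure - N.toSignedMeasure :=
    (SignedMeasure.toSignedMeasure_toJordanDecomposition μ).symm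
  have hPi : P iᶜ = 0 := by
    rw [hP, SignedMeasure.toMeasureOfZeroLE_apply _ hpos hi hi.compl]; simp
  have hNi : N i = 0 := by
    rw [hN, SignedMeasure.toMeasureOfLEZero_apply _ hneg hi.compl hi]; simp
  have hf' : Integrable f P ∧ Integrable f N := by
    have := hf
    rw [VectorMeasure.Integrable, hvar] at this
    exact integrable_add_measure.1 this
  have hPae : ∀ᵐ x ∂P, x ∈ i := by rw [ae_iff]; exact hPi
  have hNae : ∀ᵐ x ∂N, x ∉ i := by rw [ae_iff]; simpa using hNi
  have e1 : (fun x => f x * (if x ∈ i then (1 : ℝ) else -1)) =ᵐ[P] f := by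
    filter_upwards [hPae] with x hx; simp [hx]
  have e2 : (fun x => f x * (if x ∈ i then (1 : ℝ) else -1)) =ᵐ[N] fun x => - f x := by
    filter_upwards [hNae] with x hx; simp [hx]
  rw [hvar, integral_add_measure (hf'.1.congr e1.symm) (hf'.2.neg.congr e2.symm),
    integral_congr_ae e1, integral_congr_ae e2, integral_neg]
  have : VectorMeasure.integral μ f (ContinuousLinearMap.lsmul ℝ ℝ) =
      VectorMeasure.integral (P.toSignedMeasure - N.toSignedMeasure) f
        (ContinuousLinearMap.lsmul ℝ ℝ) := by rw [← hμ]
  rw [this, VectorMeasure.integral_sub_vectorMeasure,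
    integral_toSignedMeasure_lsmul, integral_toSignedMeasure_lsmul]
  · ring
  · simpa [VectorMeasure.Integrable] using hf'.1
  · simpa [VectorMeasure.Integrable] using hf'.2

theorem MeasureTheory.SignedMeasure.apply_eq_integral_indicator (μ : SignedMeasure ℝ) {E : Set ℝ}
    (hE : MeasurableSet E) :
    μ E = VectorMeasure.integral μ (E.indicator fun _ => (1 : ℝ))
      (ContinuousLinearMap.lsmul ℝ ℝ) := by
  rw [VectorMeasure.integral_indicator hE]
  simp [VectorMeasure.restrict_apply, hE]

theorem MeasureTheory.SignedMeasure.measurable_apply_Iic (μ : SignedMeasure ℝ) :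
    Measurable fun t => μ (Iic t) :=
  (VectorMeasure.stronglyMeasurable_vectorMeasure_prodMk_left (ν := μ)
    (s := {p : ℝ × ℝ | p.2 ≤ p.1}) (measurableSet_le measurable_snd measurable_fst)).measurable

theorem MeasureTheory.SignedMeasure.measurable_apply_Iio (μ : SignedMeasure ℝ) :
    Measurable fun t => μ (Iio t) :=
  (VectorMeasure.stronglyMeasurable_vectorMeasure_prodMk_left (ν := μ)
    (s := {p : ℝ × ℝ | p.2 < p.1}) (measurableSet_lt measurable_snd measurable_fst)).measurable

/-- The primitive `t ↦ μ (Iic t)` has left limit `μ (Iio x)` at `x`. -/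
theorem MeasureTheory.SignedMeasure.tendsto_apply_Iic_left (μ : SignedMeasure ℝ) (x : ℝ) :
    Tendsto (fun t => μ (Iic t)) (𝓝[<] x) (𝓝 (μ (Iio x))) := by
  simp_rw [SignedMeasure.apply_eq_integral_indicator μ measurableSet_Iic,
    SignedMeasure.apply_eq_integral_indicator μ measurableSet_Iio]
  refine VectorMeasure.tendsto_integral_filter_of_dominated_convergence (fun _ => (1 : ℝ))
    (.of_forall fun t => ?_) (.of_forall fun t => .of_forall fun y => ?_) (integrable_const _)
    (.of_forall fun y => ?_)
  · exact (measurable_const.indicator measurableSet_Iic).aestronglyMeasurable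
  · by_cases h : y ≤ t <;> simp [indicator, h]
  · apply tendsto_const_nhds.congr'
    rcases lt_or_ge y x with h | h
    · filter_upwards [Ioo_mem_nhdsLT h] with t ht
      simp [indicator, h, ht.1.le]
    · filter_upwards [self_mem_nhdsWithin] with t ht
      have : ¬ y ≤ t := not_le.2 (lt_of_lt_of_le ht h)
      simp [indicator, h.not_gt, this]

/-- The primitive `t ↦ μ (Iic t)` is right continuous. -/
theorem MeasureTheory.SignedMeasure.tendsto_apply_Iic_right (μ : SignedMeasure ℝ) (x : ℝ) :
    Tendsto (fun t => μ (Iic t)) (𝓝[>] x) (𝓝 (μ (Iic x))) := by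
  simp_rw [SignedMeasure.apply_eq_integral_indicator μ measurableSet_Iic]
  refine VectorMeasure.tendsto_integral_filter_of_dominated_convergence (fun _ => (1 : ℝ))
    (.of_forall fun t => ?_) (.of_forall fun t => .of_forall fun y => ?_) (integrable_const _)
    (.of_forall fun y => ?_)
  · exact (measurable_const.indicator measurableSet_Iic).aestronglyMeasurable
  · by_cases h : y ≤ t <;> simp [indicator, h]
  · apply tendsto_const_nhds.congr'
    rcases le_or_gt y x with h | h
    · filter_upwards [self_mem_nhdsWithin] with t ht
      have : y ≤ t := h.trans (le_of_lt ht)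
      simp [indicator, h, this]
    · filter_upwards [Ioo_mem_nhdsGT h] with t ht
      simp [indicator, h.not_ge, ht.2.not_ge]

/-- Fubini: the distributional derivative of `t ↦ m.withDensity h (T ≤ t)` is the image under `T`
of the measure with density `h`. -/
theorem integral_sublevel_mul_deriv {X : Type*} [MeasurableSpace X] (m : Measure X)
    [IsFiniteMeasure m] {T h : X → ℝ} (hT : Measurable T) (hh : Integrable h m)
    {φ : ℝ → ℝ} (hφ : ContDiff ℝ ∞ φ) (hc : HasCompactSupport φ) :
    ∫ t, (∫ x, (Iic t).indicator (fun _ => (1 : ℝ)) (T x) * h x ∂m) * deriv φ t =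
      - ∫ x, φ (T x) * h x ∂m := by
  have hd : Continuous (deriv φ) := hφ.continuous_deriv (by simp)
  have hdi : Integrable (deriv φ) := hd.integrable_of_hasCompactSupport hc.deriv
  have hint : Integrable (Function.uncurry fun t x =>
      (Iic t).indicator (fun _ => (1 : ℝ)) (T x) * h x * deriv φ t) (volume.prod m) := by
    have h0 : Integrable (fun p : ℝ × X => deriv φ p.1 * h p.2) (volume.prod m) :=
      hdi.mul_prod hh
    have hs : MeasurableSet {p : ℝ × X | T p.2 ≤ p.1} :=
      measurableSet_le (hT.comp measurable_snd) measurable_fst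
    refine (h0.indicator hs).congr (.of_forall fun p => ?_)
    by_cases hp : T p.2 ≤ p.1 <;> simp [Function.uncurry, indicator, hp, mul_comm]
  simp_rw [← integral_mul_const]
  rw [integral_integral_swap hint, ← integral_neg]
  congr 1 with x
  have : ∀ t, (Iic t).indicator (fun _ => (1 : ℝ)) (T x) * h x * deriv φ t =
      h x * (Ici (T x)).indicator (deriv φ) t := by
    intro t
    by_cases ht : T x ≤ t <;> simp [indicator, ht]
  simp_rw [this, integral_const_mul, integral_indicator measurableSet_Ici,
    integral_Ici_eq_integral_Ioi]
  rw [hc.integral_Ioi_deriv_eq (hφ.of_le (by simp))]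
  ring

/-- The precise representative of the primitive `t ↦ μ (Iic t)`. -/
noncomputable def MeasureTheory.SignedMeasure.midPrimitive (μ : SignedMeasure ℝ) (x : ℝ) : ℝ :=
  (μ (Iic x) + μ (Iio x)) / 2

theorem MeasureTheory.SignedMeasure.measurable_midPrimitive (μ : SignedMeasure ℝ) :
    Measurable (SignedMeasure.midPrimitive μ) :=
  ((SignedMeasure.measurable_apply_Iic μ).add (SignedMeasure.measurable_apply_Iio μ)).div_const 2

theorem MeasureTheory.SignedMeasure.norm_midPrimitive_le (μ : SignedMeasure ℝ) (x : ℝ) :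
    ‖SignedMeasure.midPrimitive μ x‖ ≤ μ.bound := by
  have h1 : ‖μ (Iic x)‖ ≤ μ.bound := VectorMeasure.norm_apply_le_bound
  have h2 : ‖μ (Iio x)‖ ≤ μ.bound := VectorMeasure.norm_apply_le_bound
  rw [SignedMeasure.midPrimitive, norm_div, Real.norm_two]
  linarith [norm_add_le (μ (Iic x)) (μ (Iio x))]

theorem MeasureTheory.SignedMeasure.integrable_of_bound (μ : SignedMeasure ℝ) {f : ℝ → ℝ} (hf : Measurable f)
    (C : ℝ) (hC : ∀ x, ‖f x‖ ≤ C) : VectorMeasure.Integrable μ f :=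
  Integrable.of_bound hf.aestronglyMeasurable C (.of_forall hC)

/-- The signed measure `μ` is the distributional derivative of `t ↦ μ (Iic t)`. -/
theorem MeasureTheory.SignedMeasure.integral_primitive_mul_deriv (μ : SignedMeasure ℝ) {φ : ℝ → ℝ}
    (hφ : ContDiff ℝ ∞ φ) (hc : HasCompactSupport φ) :
    ∫ t, μ (Iic t) * deriv φ t =
      - VectorMeasure.integral μ φ (ContinuousLinearMap.lsmul ℝ ℝ) := by
  obtain ⟨h, hm, hb, hint⟩ := SignedMeasure.exists_polar μ
  obtain ⟨C, hC⟩ := hc.exists_bound_of_continuous hφ.continuous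
  have hi : Integrable h μ.variation :=
    Integrable.of_bound hm.aestronglyMeasurable 1 (.of_forall hb)
  rw [hint φ (SignedMeasure.integrable_of_bound μ hφ.continuous.measurable C hC),
    ← integral_sublevel_mul_deriv μ.variation (T := fun x => x) measurable_id' hi hφ hc]
  congr 1 with t
  rw [SignedMeasure.apply_eq_integral_indicator μ measurableSet_Iic, hint]
  exact (integrable_const _).indicator measurableSet_Iic

theorem apply_max_eq_mid (φ : ℝ → ℝ) (x y : ℝ) :
    φ (max x y) =
      φ x * (((Iic x).indicator (fun _ => (1 : ℝ)) y + (Iio x).indicator (fun _ => 1) y) / 2) +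
      φ y * (((Iic y).indicator (fun _ => (1 : ℝ)) x + (Iio y).indicator (fun _ => 1) x) / 2) := by
  rcases lt_trichotomy x y with h | rfl | h
  · simp [indicator, h, h.le, h.not_ge, h.not_gt]
  · simp [indicator]; ring
  · simp [indicator, h, h.le, h.not_ge, h.not_gt]

theorem MeasureTheory.SignedMeasure.midPrimitive_eq_integral (ν : SignedMeasure ℝ) {k : ℝ → ℝ}
    (hint : ∀ f : ℝ → ℝ, VectorMeasure.Integrable ν f →
        VectorMeasure.integral ν f (ContinuousLinearMap.lsmul ℝ ℝ) =
          ∫ x, f x * k x ∂ν.variation) (x : ℝ) :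
    SignedMeasure.midPrimitive ν x =
      ∫ y, ((Iic x).indicator (fun _ => (1 : ℝ)) y + (Iio x).indicator (fun _ => 1) y) / 2 * k y
        ∂ν.variation := by
  have i1 : VectorMeasure.Integrable ν ((Iic x).indicator fun _ => (1 : ℝ)) :=
    (integrable_const _).indicator measurableSet_Iic
  have i2 : VectorMeasure.Integrable ν ((Iio x).indicator fun _ => (1 : ℝ)) :=
    (integrable_const _).indicator measurableSet_Iio
  refine Eq.trans ?_ (hint (fun y => ((Iic x).indicator (fun _ => (1 : ℝ)) y +
    (Iio x).indicator (fun _ => 1) y) / 2) ((i1.add i2).div_const 2))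
  simp_rw [div_eq_inv_mul, ← smul_eq_mul (a := (2 : ℝ)⁻¹)]
  rw [VectorMeasure.integral_fun_smul, VectorMeasure.integral_fun_add i1 i2,
    ← SignedMeasure.apply_eq_integral_indicator ν measurableSet_Iic,
    ← SignedMeasure.apply_eq_integral_indicator ν measurableSet_Iio,
    SignedMeasure.midPrimitive, smul_eq_mul]
  ring

theorem integrable_mid_kernel (m n : Measure ℝ) [IsFiniteMeasure m] [IsFiniteMeasure n]
    {h k φ : ℝ → ℝ} (hh : Integrable (fun x => φ x * h x) m) (hk : Integrable k n) :
    Integrable (fun p : ℝ × ℝ => φ p.1 *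
      (((Iic p.1).indicator (fun _ => (1 : ℝ)) p.2 + (Iio p.1).indicator (fun _ => 1) p.2) / 2) *
        (h p.1 * k p.2)) (m.prod n) := by
  have h0 : Integrable (fun p : ℝ × ℝ => φ p.1 * h p.1 * k p.2) (m.prod n) := hh.mul_prod hk
  have s1 : MeasurableSet {p : ℝ × ℝ | p.2 ≤ p.1} := measurableSet_le measurable_snd measurable_fst
  have s2 : MeasurableSet {p : ℝ × ℝ | p.2 < p.1} := measurableSet_lt measurable_snd measurable_fst
  refine (((h0.indicator s1).add (h0.indicator s2)).div_const 2).congr (.of_forall fun p => ?_)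
  by_cases a : p.2 ≤ p.1 <;> by_cases b : p.2 < p.1 <;> simp [indicator, a, b] <;> ring

/-- Leibniz rule for the primitives of two signed measures. -/
theorem MeasureTheory.SignedMeasure.integral_primitive_mul_primitive_mul_deriv (μ ν : SignedMeasure ℝ)
    {φ : ℝ → ℝ} (hφ : ContDiff ℝ ∞ φ) (hc : HasCompactSupport φ) :
    ∫ t, μ (Iic t) * ν (Iic t) * deriv φ t =
      - (VectorMeasure.integral μ (fun x => φ x * SignedMeasure.midPrimitive ν x)
          (ContinuousLinearMap.lsmul ℝ ℝ) +
        VectorMeasure.integral ν (fun x => φ x * SignedMeasure.midPrimitive μ x)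
          (ContinuousLinearMap.lsmul ℝ ℝ)) := by
  obtain ⟨h, hm, hb, hint⟩ := SignedMeasure.exists_polar μ
  obtain ⟨k, km, kb, kint⟩ := SignedMeasure.exists_polar ν
  obtain ⟨C, hC⟩ := hc.exists_bound_of_continuous hφ.continuous
  have hC0 : 0 ≤ C := (norm_nonneg _).trans (hC 0)
  have hφm := hφ.continuous.measurable
  have hi : Integrable h μ.variation :=
    Integrable.of_bound hm.aestronglyMeasurable 1 (.of_forall hb)
  have ki : Integrable k ν.variation :=
    Integrable.of_bound km.aestronglyMeasurable 1 (.of_forall kb)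
  have hφh : Integrable (fun x => φ x * h x) μ.variation :=
    hi.bdd_mul hφm.aestronglyMeasurable (.of_forall hC)
  have hφk : Integrable (fun x => φ x * k x) ν.variation :=
    ki.bdd_mul hφm.aestronglyMeasurable (.of_forall hC)
  have bdd : ∀ (ρ ρ' : SignedMeasure ℝ),
      VectorMeasure.Integrable ρ (fun x => φ x * SignedMeasure.midPrimitive ρ' x) := fun ρ ρ' =>
    SignedMeasure.integrable_of_bound ρ (hφm.mul (SignedMeasure.measurable_midPrimitive ρ'))
      (C * ρ'.bound) fun x => by
        rw [norm_mul]
        exact mul_le_mul (hC x) (SignedMeasure.norm_midPrimitive_le ρ' x) (norm_nonneg _) hC0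
  rw [hint _ (bdd μ ν), kint _ (bdd ν μ)]
  have key := integral_sublevel_mul_deriv (μ.variation.prod ν.variation)
    (T := fun p => max p.1 p.2) (h := fun p => h p.1 * k p.2)
    (measurable_fst.max measurable_snd) (hi.mul_prod ki) hφ hc
  have lhs : ∀ t, μ (Iic t) * ν (Iic t) =
      ∫ p : ℝ × ℝ, (Iic t).indicator (fun _ => (1 : ℝ)) (max p.1 p.2) * (h p.1 * k p.2)
        ∂(μ.variation.prod ν.variation) := by
    intro t
    rw [SignedMeasure.apply_eq_integral_indicator μ measurableSet_Iic,
      SignedMeasure.apply_eq_integral_indicator ν measurableSet_Iic,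
      hint _ ((integrable_const _).indicator measurableSet_Iic),
      kint _ ((integrable_const _).indicator measurableSet_Iic), ← integral_prod_mul]
    congr 1 with p
    by_cases a : p.1 ≤ t <;> by_cases b : p.2 ≤ t <;> simp [indicator, a, b]
  simp_rw [lhs, key, apply_max_eq_mid, add_mul]
  have I1 := integrable_mid_kernel μ.variation ν.variation hφh ki
  have I2 : Integrable (fun p : ℝ × ℝ => φ p.2 *
      (((Iic p.2).indicator (fun _ => (1 : ℝ)) p.1 + (Iio p.2).indicator (fun _ => 1) p.1) / 2) *
        (h p.1 * k p.2)) (μ.variation.prod ν.variation) := by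
    refine (integrable_mid_kernel ν.variation μ.variation hφk hi).swap.congr
      (.of_forall fun p => ?_)
    simp only [Function.comp, Prod.fst_swap, Prod.snd_swap]
    ring
  rw [integral_add I1 I2, integral_prod _ I1, integral_prod_symm _ I2]
  congr 2
  · congr 1 with x
    rw [SignedMeasure.midPrimitive_eq_integral ν kint, mul_assoc, mul_comm _ (h x), ← mul_assoc,
      ← integral_const_mul]
    congr 1 with y
    ring
  · congr 1 with y
    rw [SignedMeasure.midPrimitive_eq_integral μ hint, mul_assoc, mul_comm _ (k y), ← mul_assoc,
      ← integral_const_mul]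
    congr 1 with x
    ring

/-- A test function with zero integral is the derivative of a test function. -/
theorem exists_testFunction_deriv_eq {J : Set ℝ} (hJ : J.OrdConnected) (hne : J.Nonempty)
    {η : ℝ → ℝ} (hη : ContDiff ℝ ∞ η) (hc : HasCompactSupport η) (hs : tsupport η ⊆ J)
    (h0 : ∫ x, η x = 0) :
    ∃ φ : ℝ → ℝ, ContDiff ℝ ∞ φ ∧ HasCompactSupport φ ∧ tsupport φ ⊆ J ∧ deriv φ = η := by
  obtain ⟨x₀, hx₀⟩ := hne
  have hK : IsCompact (insert x₀ (tsupport η)) := hc.isCompact.insert x₀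
  have hKJ : insert x₀ (tsupport η) ⊆ J := insert_subset hx₀ hs
  obtain ⟨a, ha⟩ := hK.exists_isLeast (insert_nonempty _ _)
  obtain ⟨b, hb⟩ := hK.exists_isGreatest (insert_nonempty _ _)
  have hsub : Function.support η ⊆ Ioo a b := by
    rw [← interior_Icc]
    refine interior_maximal (fun x hx => ?_) hη.continuous.isOpen_support
    have : x ∈ insert x₀ (tsupport η) := mem_insert_of_mem _ (subset_tsupport _ hx)
    exact ⟨ha.2 this, hb.2 this⟩
  have hderiv : ∀ x, HasDerivAt (fun x => ∫ t in a..x, η t) (η x) x := fun x =>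
    intervalIntegral.integral_hasDerivAt_right (hη.continuous.intervalIntegrable _ _)
      (hη.continuous.stronglyMeasurableAtFilter _ _) hη.continuous.continuousAt
  have hd : deriv (fun x => ∫ t in a..x, η t) = η := funext fun x => (hderiv x).deriv
  have hsupp : tsupport (fun x => ∫ t in a..x, η t) ⊆ Icc a b := by
    refine closure_minimal (fun x hx => ?_) isClosed_Icc
    by_contra hxI
    refine hx ?_
    rcases lt_or_ge x a with h | h
    · refine (intervalIntegral.integral_congr (g := fun _ => (0 : ℝ)) fun t ht => ?_).trans (by simp)
      by_contra hne
      have := hsub hne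
      rw [uIcc_of_ge h.le] at ht
      exact ht.2.not_gt this.1
    · have hbx : b < x := by by_contra hh; exact hxI ⟨h, not_lt.1 hh⟩
      refine (intervalIntegral.integral_eq_integral_of_support_subset fun t ht => ?_).trans h0
      exact ⟨(hsub ht).1, (hsub ht).2.le.trans hbx.le⟩
  refine ⟨fun x => ∫ t in a..x, η t, ?_, ?_, ?_, hd⟩
  · rw [contDiff_infty_iff_deriv, hd]
    exact ⟨fun x => (hderiv x).differentiableAt, hη⟩
  · exact isCompact_Icc.of_isClosed_subset (isClosed_tsupport _) hsupp
  · exact hsupp.trans (hJ.out (hKJ ha.1) (hKJ hb.1))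

/-- Du Bois-Reymond: a function with zero distributional derivative on an open interval is
almost everywhere constant there. -/
theorem ae_eq_const_of_integral_mul_deriv_eq_zero {J : Set ℝ} (hJo : IsOpen J)
    (hJ : J.OrdConnected) {f : ℝ → ℝ} (hf : LocallyIntegrable f)
    (h : ∀ φ : ℝ → ℝ, ContDiff ℝ ∞ φ → HasCompactSupport φ → tsupport φ ⊆ J →
      ∫ x, f x * deriv φ x = 0) :
    ∃ c, ∀ᵐ x, x ∈ J → f x = c := by
  rcases J.eq_empty_or_nonempty with rfl | hne
  · exact ⟨0, by simp⟩
  obtain ⟨x₀, hx₀⟩ := hne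
  obtain ⟨ψ, ψs, ψc, ψd, ψr, ψ1⟩ :=
    exists_contDiff_tsupport_subset (n := ⊤) (hJo.mem_nhds hx₀)
  have hA : 0 < ∫ x, ψ x := ψd.continuous.integral_pos_of_hasCompactSupport_nonneg_nonzero ψc
    (fun x => (ψr (mem_range_self x)).1) (by rw [ψ1]; exact one_ne_zero)
  have ψi := ψd.continuous.integrable_of_hasCompactSupport ψc (μ := volume)
  set A := ∫ x, ψ x
  have hmul : ∀ g : ℝ → ℝ, Continuous g → HasCompactSupport g → Integrable fun x => g x * f x :=
    fun g hg gc => hf.integrable_smul_left_of_hasCompactSupport hg gc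
  refine ⟨(∫ x, ψ x * f x) / A, ?_⟩
  have key := hJo.ae_eq_zero_of_integral_contDiff_smul_eq_zero (μ := volume)
    (f := fun x => f x - (∫ x, ψ x * f x) / A)
    ((hf.sub (locallyIntegrable_const _)).locallyIntegrableOn _) ?_
  · filter_upwards [key] with x hx hxJ using sub_eq_zero.1 (hx hxJ)
  intro g gd gc gs
  have gi := gd.continuous.integrable_of_hasCompactSupport gc (μ := volume)
  set B := ∫ x, g x with hB
  have ηc : HasCompactSupport (fun x => g x - B / A * ψ x) := gc.sub ψc.mul_left
  obtain ⟨φ, φd, φc, φs, hφ⟩ := exists_testFunction_deriv_eq hJ ⟨x₀, hx₀⟩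
    (η := fun x => g x - B / A * ψ x) (gd.sub (contDiff_const.mul ψd)) ηc
    ((tsupport_sub _ _).trans (union_subset gs ((tsupport_mul_subset_right).trans ψs)))
    (by rw [integral_sub gi (ψi.const_mul _), integral_const_mul]
        change B - B / A * A = 0
        field_simp; ring)
  have h1 := h φ φd φc φs
  rw [hφ] at h1
  have e1 : ∀ x, f x * (g x - B / A * ψ x) = g x * f x - B / A * (ψ x * f x) := fun x => by ring
  simp_rw [e1] at h1
  rw [integral_sub (hmul g gd.continuous gc) ((hmul ψ ψd.continuous ψc).const_mul _),
    integral_const_mul] at h1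
  simp_rw [smul_eq_mul, mul_sub]
  rw [integral_sub (hmul g gd.continuous gc) (gi.mul_const _), integral_mul_const, ← hB,
    ← h1]
  ring

theorem setIntegral_mul_deriv_eq_integral {I : Set ℝ} (u : ℝ → ℝ) {φ : ℝ → ℝ}
    (hs : tsupport φ ⊆ interior I) :
    ∫ x in I, u x * deriv φ x = ∫ x, u x * deriv φ x := by
  refine setIntegral_eq_integral_of_forall_compl_eq_zero fun x hx => ?_
  have : deriv φ x = 0 := by
    by_contra h
    exact hx (interior_subset (hs (support_deriv_subset h)))
  rw [this, mul_zero]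

theorem MeasureTheory.SignedMeasure.locallyIntegrable_primitive (μ : SignedMeasure ℝ) :
    LocallyIntegrable fun t => μ (Iic t) :=
  (memLp_top_of_bound (SignedMeasure.measurable_apply_Iic μ).aestronglyMeasurable μ.bound
    (.of_forall fun _ => VectorMeasure.norm_apply_le_bound)).locallyIntegrable le_top

/-- A function of bounded variation is almost everywhere a constant plus the primitive of its
derivative. -/
theorem IsDistribDeriv.exists_ae_eq_primitive {I : Set ℝ} (hI : I.OrdConnected) {u : ℝ → ℝ}
    (hu : IntegrableOn u I) {μ : SignedMeasure ℝ} (hμ : IsDistribDeriv I u μ) :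
    ∃ c, ∀ᵐ x, x ∈ interior I → u x = c + μ (Iic x) := by
  have hui : Integrable (I.indicator u) := (integrable_indicator_iff hI.measurableSet).2 hu
  have hU := SignedMeasure.locallyIntegrable_primitive μ
  have hzero : ∀ φ : ℝ → ℝ, ContDiff ℝ ∞ φ → HasCompactSupport φ → tsupport φ ⊆ interior I →
      ∫ x, (I.indicator u x - μ (Iic x)) * deriv φ x = 0 := by
    intro φ φd φc φs
    have hd : Continuous (deriv φ) := φd.continuous_deriv (by simp)
    have i1 := hui.locallyIntegrable.integrable_smul_right_of_hasCompactSupport hd φc.deriv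
    have i2 := hU.integrable_smul_right_of_hasCompactSupport hd φc.deriv
    simp_rw [smul_eq_mul] at i1 i2
    simp_rw [sub_mul]
    have e : ∫ x, I.indicator u x * deriv φ x = ∫ x in I, u x * deriv φ x := by
      rw [← integral_indicator hI.measurableSet]
      congr 1 with x
      by_cases hx : x ∈ I <;> simp [hx]
    rw [integral_sub i1 i2, e, hμ.2 φ φd φc φs,
      SignedMeasure.integral_primitive_mul_deriv μ φd φc, sub_self]
  obtain ⟨c, hc⟩ := ae_eq_const_of_integral_mul_deriv_eq_zero isOpen_interior hI.interior
    (f := fun x => I.indicator u x - μ (Iic x)) (hui.locallyIntegrable.sub hU) hzero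
  refine ⟨c, ?_⟩
  filter_upwards [hc] with x hx hxI
  have := hx hxI
  rw [indicator_of_mem (interior_subset hxI)] at this
  linarith

theorem neBot_inf_ae_volume {l : Filter ℝ} (hl : ∀ s ∈ l, volume s ≠ 0) :
    (l ⊓ ae volume).NeBot := by
  rw [inf_neBot_iff]
  intro s hs t ht
  by_contra hne
  refine hl s hs (measure_mono_null (fun x hx hxt => hne ⟨x, hx, hxt⟩) ht)

instance nhdsLT_inf_ae_neBot (x : ℝ) : (𝓝[<] x ⊓ ae volume).NeBot := by
  refine neBot_inf_ae_volume fun s hs h0 => ?_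
  obtain ⟨y, hy, hys⟩ := mem_nhdsLT_iff_exists_Ioo_subset.1 hs
  have := measure_mono_null hys h0
  simp only [Real.volume_Ioo, ENNReal.ofReal_eq_zero, sub_nonpos] at this
  exact absurd hy (not_lt.2 this)

instance nhdsGT_inf_ae_neBot (x : ℝ) : (𝓝[>] x ⊓ ae volume).NeBot := by
  refine neBot_inf_ae_volume fun s hs h0 => ?_
  obtain ⟨y, hy, hys⟩ := mem_nhdsGT_iff_exists_Ioo_subset.1 hs
  have := measure_mono_null hys h0
  simp only [Real.volume_Ioo, ENNReal.ofReal_eq_zero, sub_nonpos] at this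
  exact absurd hy (not_lt.2 this)

theorem tendsto_inf_ae_of_ae_eq {J : Set ℝ} (hJ : IsOpen J) {u w : ℝ → ℝ}
    (h : ∀ᵐ x, x ∈ J → u x = w x) {x L : ℝ} (hx : x ∈ J) {s : Set ℝ}
    (hw : Tendsto w (𝓝[s] x) (𝓝 L)) : Tendsto u (𝓝[s] x ⊓ ae volume) (𝓝 L) := by
  refine (hw.mono_left inf_le_left).congr' ?_
  have h1 : ∀ᶠ y in 𝓝[s] x ⊓ ae volume, y ∈ J :=
    (inf_le_left.trans nhdsWithin_le_nhds : 𝓝[s] x ⊓ ae volume ≤ 𝓝 x) (hJ.mem_nhds hx)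
  have h2 : ∀ᶠ y in 𝓝[s] x ⊓ ae volume, y ∈ J → u y = w y :=
    (inf_le_right : 𝓝[s] x ⊓ ae volume ≤ ae volume) h
  filter_upwards [h1, h2] with y a b using (b a).symm

theorem preciseRep_eq_midPrimitive {I : Set ℝ} {u : ℝ → ℝ} {μ : SignedMeasure ℝ} {c : ℝ}
    (h : ∀ᵐ x, x ∈ interior I → u x = c + μ (Iic x)) {x : ℝ} (hx : x ∈ interior I) :
    preciseRep I u x = c + SignedMeasure.midPrimitive μ x := by
  have hI : I ∈ 𝓝 x := mem_interior_iff_mem_nhds.1 hx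
  have hl : ∃ y ∈ I, y < x := by
    obtain ⟨y, hy1, hy2⟩ := Filter.nonempty_of_mem
      (inter_mem (mem_nhdsWithin_of_mem_nhds hI) (self_mem_nhdsWithin : Iio x ∈ 𝓝[<] x))
    exact ⟨y, hy1, hy2⟩
  have hr : ∃ y ∈ I, x < y := by
    obtain ⟨y, hy1, hy2⟩ := Filter.nonempty_of_mem
      (inter_mem (mem_nhdsWithin_of_mem_nhds hI) (self_mem_nhdsWithin : Ioi x ∈ 𝓝[>] x))
    exact ⟨y, hy1, hy2⟩
  have e1 : bvLeftLim I u x = c + μ (Iio x) := by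
    rw [bvLeftLim, if_pos hl, essLimWithin,
      nhdsWithin_inter_of_mem (mem_nhdsWithin_of_mem_nhds hI)]
    exact (tendsto_inf_ae_of_ae_eq isOpen_interior h hx
      ((SignedMeasure.tendsto_apply_Iic_left μ x).const_add c)).limUnder_eq
  have e2 : bvRightLim I u x = c + μ (Iic x) := by
    rw [bvRightLim, if_pos hr, essLimWithin,
      nhdsWithin_inter_of_mem (mem_nhdsWithin_of_mem_nhds hI)]
    exact (tendsto_inf_ae_of_ae_eq isOpen_interior h hx
      ((SignedMeasure.tendsto_apply_Iic_right μ x).const_add c)).limUnder_eq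
  rw [preciseRep, e1, e2, SignedMeasure.midPrimitive]
  ring

theorem IsDistribDeriv.ae_mem_interior {I : Set ℝ} {u : ℝ → ℝ} {μ : SignedMeasure ℝ}
    (hμ : IsDistribDeriv I u μ) : ∀ᵐ x ∂μ.variation, x ∈ interior I := by
  rw [ae_iff]
  refine (VectorMeasure.variation_apply_eq_zero isOpen_interior.measurableSet.compl).2 ?_
  exact fun t ht htm => hμ.1 t htm (disjoint_left.2 fun x hx => ht hx)

theorem MeasureTheory.SignedMeasure.integrable_testFunction (μ : SignedMeasure ℝ) {φ : ℝ → ℝ}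
    (hφ : ContDiff ℝ ∞ φ) (hc : HasCompactSupport φ) : VectorMeasure.Integrable μ φ :=
  hφ.continuous.integrable_of_hasCompactSupport hc

/-- The distributional derivative is unique. -/
theorem IsDistribDeriv.unique {I : Set ℝ} {u : ℝ → ℝ} {μ ν : SignedMeasure ℝ}
    (hμ : IsDistribDeriv I u μ) (hν : IsDistribDeriv I u ν) : μ = ν := by
  rw [← sub_eq_zero]
  set ρ := μ - ν with hρ
  obtain ⟨h, hm, hb, hint⟩ := SignedMeasure.exists_polar ρ
  have hi : Integrable h ρ.variation :=
    Integrable.of_bound hm.aestronglyMeasurable 1 (.of_forall hb)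
  have h0 : ∀ᵐ x ∂ρ.variation, x ∈ interior I → h x = 0 := by
    refine isOpen_interior.ae_eq_zero_of_integral_contDiff_smul_eq_zero
      (hi.locallyIntegrable.locallyIntegrableOn _) fun g gd gc gs => ?_
    simp_rw [smul_eq_mul]
    rw [← hint g (SignedMeasure.integrable_testFunction ρ gd gc), hρ,
      VectorMeasure.integral_sub_vectorMeasure (SignedMeasure.integrable_testFunction μ gd gc)
        (SignedMeasure.integrable_testFunction ν gd gc)]
    have a := hμ.2 g gd gc gs
    have b := hν.2 g gd gc gs
    linarith
  have hJ : MeasurableSet (interior I) := isOpen_interior.measurableSet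
  ext E hE
  have hd : ρ (E \ interior I) = 0 := by
    rw [hρ, _root_.sub_apply, hμ.1 _ (hE.diff hJ) disjoint_sdiff_left,
      hν.1 _ (hE.diff hJ) disjoint_sdiff_left, sub_zero]
  have hin : ρ (E ∩ interior I) = 0 := by
    rw [SignedMeasure.apply_eq_integral_indicator ρ (hE.inter hJ),
      hint _ ((integrable_const _).indicator (hE.inter hJ))]
    refine integral_eq_zero_of_ae ?_
    filter_upwards [h0] with x hx
    by_cases hxJ : x ∈ interior I
    · simp [hx hxJ]
    · simp [hxJ]
  rw [← inter_union_sdiff E (interior I), VectorMeasure.of_union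
    (disjoint_sdiff_right.mono_left inter_subset_right) (hE.inter hJ) (hE.diff hJ), hin, hd]
  simp

theorem integral_withDensityᵥ_lsmul (m : Measure ℝ) {g φ : ℝ → ℝ} (hg : Integrable g m)
    (hφ : Measurable φ) {C : ℝ} (hC : ∀ x, ‖φ x‖ ≤ C) :
    VectorMeasure.integral (m.withDensityᵥ g) φ (ContinuousLinearMap.lsmul ℝ ℝ) =
      ∫ x, φ x * g x ∂m := by
  have f1 := isFiniteMeasure_withDensity_ofReal hg.2
  have f2 := isFiniteMeasure_withDensity_ofReal hg.neg.2
  have hi : ∀ (n : Measure ℝ) [IsFiniteMeasure n], VectorMeasure.Integrable n.toSignedMeasure φ :=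
    fun n _ => SignedMeasure.integrable_of_bound _ hφ C hC
  have hp : ∀ g' : ℝ → ℝ, Integrable g' m →
      Integrable (fun x => (ENNReal.ofReal (g' x)).toReal • φ x) m := fun g' hg' => by
    simp_rw [ENNReal.toReal_ofReal']
    exact hg'.pos_part.mul_bdd (c := C) hφ.aestronglyMeasurable (.of_forall hC)
  rw [withDensityᵥ_eq_withDensity_pos_part_sub_withDensity_neg_part hg,
    VectorMeasure.integral_sub_vectorMeasure (hi _) (hi (m.withDensity fun x => .ofReal (-g x))),
    integral_toSignedMeasure_lsmul, integral_toSignedMeasure_lsmul (m.withDensity _),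
    integral_withDensity_eq_integral_toReal_smul₀ hg.aemeasurable.ennreal_ofReal
      (.of_forall fun _ => ENNReal.ofReal_lt_top),
    integral_withDensity_eq_integral_toReal_smul₀ (f := fun x => ENNReal.ofReal (-g x))
      hg.aemeasurable.neg.ennreal_ofReal
      (.of_forall fun _ => ENNReal.ofReal_lt_top),
    ← integral_sub (hp g hg) (hp (fun x => -g x) hg.neg)]
  congr 1 with x
  simp only [ENNReal.toReal_ofReal', smul_eq_mul, ← sub_mul]
  rcases le_total 0 (g x) with h | h
  · rw [max_eq_left h, max_eq_right (neg_nonpos.2 h)]; ring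
  · rw [max_eq_right h, max_eq_left (neg_nonneg.2 h)]; ring

/-- Integrating against `f μ` amounts to integrating the product with `f` against `μ`. -/
theorem integral_densityMul (μ : SignedMeasure ℝ) {f φ : ℝ → ℝ}
    (hf : VectorMeasure.Integrable μ f) (hφ : Measurable φ) {C : ℝ} (hC : ∀ x, ‖φ x‖ ≤ C) :
    VectorMeasure.integral (densityMul f μ) φ (ContinuousLinearMap.lsmul ℝ ℝ) =
      VectorMeasure.integral μ (fun x => φ x * f x) (ContinuousLinearMap.lsmul ℝ ℝ) := by
  obtain ⟨h, hm, hb, hint⟩ := SignedMeasure.exists_polar μ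
  have hg : Integrable (fun x => f x * h x) μ.variation :=
    hf.mul_bdd (c := 1) hm.aestronglyMeasurable (.of_forall hb)
  have e : densityMul f μ = μ.variation.withDensityᵥ fun x => f x * h x := by
    ext E hE
    rw [densityMul, VectorMeasure.withDensity_apply hf, ← VectorMeasure.integral_indicator hE,
      hint _ (Integrable.indicator hf hE), withDensityᵥ_apply hg hE, ← integral_indicator hE]
    congr 1 with x
    by_cases hx : x ∈ E <;> simp [hx]
  rw [e, integral_withDensityᵥ_lsmul _ hg hφ hC,
    hint _ (Integrable.bdd_mul hf hφ.aestronglyMeasurable (.of_forall hC))]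
  simp_rw [mul_assoc]

theorem integrable_preciseRep {I : Set ℝ} {u v : ℝ → ℝ} {μ ν : SignedMeasure ℝ}
    (hμ : IsDistribDeriv I u μ) {d : ℝ}
    (hd : ∀ᵐ x, x ∈ interior I → v x = d + ν (Iic x)) :
    preciseRep I v =ᵐ[μ.variation] (fun x => d + SignedMeasure.midPrimitive ν x) ∧
      VectorMeasure.Integrable μ (preciseRep I v) := by
  have e : preciseRep I v =ᵐ[μ.variation] fun x => d + SignedMeasure.midPrimitive ν x := by
    filter_upwards [hμ.ae_mem_interior] with x hx using preciseRep_eq_midPrimitive hd hx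
  refine ⟨e, Integrable.congr ?_ e.symm⟩
  exact (integrable_const d).add (SignedMeasure.integrable_of_bound μ
    (SignedMeasure.measurable_midPrimitive ν) _ (SignedMeasure.norm_midPrimitive_le ν))

theorem densityMul_eq_zero_of_disjoint {I : Set ℝ} {u : ℝ → ℝ} {μ : SignedMeasure ℝ}
    (hμ : IsDistribDeriv I u μ) {f : ℝ → ℝ} (hf : VectorMeasure.Integrable μ f) {E : Set ℝ}
    (hE : MeasurableSet E) (hd : Disjoint E (interior I)) : densityMul f μ E = 0 := by
  rw [densityMul, VectorMeasure.withDensity_apply hf, ← VectorMeasure.integral_indicator hE]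
  refine VectorMeasure.integral_eq_zero_of_ae ?_
  filter_upwards [hμ.ae_mem_interior] with x hx
  simp [disjoint_right.1 hd hx]

theorem integral_densityMul_preciseRep {I : Set ℝ} {u v : ℝ → ℝ} {μ ν : SignedMeasure ℝ}
    (hμ : IsDistribDeriv I u μ) {d : ℝ}
    (hd : ∀ᵐ x, x ∈ interior I → v x = d + ν (Iic x)) {φ : ℝ → ℝ}
    (hφ : ContDiff ℝ ∞ φ) (hc : HasCompactSupport φ) :
    VectorMeasure.integral (densityMul (preciseRep I v) μ) φ (ContinuousLinearMap.lsmul ℝ ℝ) =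
      d * VectorMeasure.integral μ φ (ContinuousLinearMap.lsmul ℝ ℝ) +
        VectorMeasure.integral μ (fun x => φ x * SignedMeasure.midPrimitive ν x)
          (ContinuousLinearMap.lsmul ℝ ℝ) := by
  obtain ⟨C, hC⟩ := hc.exists_bound_of_continuous hφ.continuous
  obtain ⟨e, hi⟩ := integrable_preciseRep hμ hd
  have hφi := SignedMeasure.integrable_testFunction μ hφ hc
  have hmid : VectorMeasure.Integrable μ (fun x => φ x * SignedMeasure.midPrimitive ν x) :=
    Integrable.mul_bdd (c := ν.bound) hφi
      (SignedMeasure.measurable_midPrimitive ν).aestronglyMeasurable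
      (.of_forall (SignedMeasure.norm_midPrimitive_le ν))
  rw [integral_densityMul μ hi hφ.continuous.measurable hC, ← smul_eq_mul (a := d),
    ← VectorMeasure.integral_fun_smul,
    ← VectorMeasure.integral_fun_add (f := fun x => d • φ x) (hφi.smul d) hmid]
  refine VectorMeasure.integral_congr_ae ?_
  filter_upwards [e] with x hx
  simp only [hx, smul_eq_mul]
  ring

/-- The Leibniz rule: `⟨v⟩ u' + ⟨u⟩ v'` is the distributional derivative of `u v`. -/
theorem IsDistribDeriv.mul {I : Set ℝ} (hI : I.OrdConnected) {u v : ℝ → ℝ}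
    (hu : IntegrableOn u I) (hv : IntegrableOn v I) {μ ν : SignedMeasure ℝ}
    (hμ : IsDistribDeriv I u μ) (hν : IsDistribDeriv I v ν) :
    VectorMeasure.Integrable μ (preciseRep I v) ∧ VectorMeasure.Integrable ν (preciseRep I u) ∧
      IsDistribDeriv I (fun x => u x * v x)
        (densityMul (preciseRep I v) μ + densityMul (preciseRep I u) ν) := by
  obtain ⟨c, hc⟩ := hμ.exists_ae_eq_primitive hI hu
  obtain ⟨d, hd⟩ := hν.exists_ae_eq_primitive hI hv
  have iv := (integrable_preciseRep hμ hd).2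
  have iu := (integrable_preciseRep hν hc).2
  refine ⟨iv, iu, fun E hE hEd => ?_, fun φ φd φc φs => ?_⟩
  · rw [_root_.add_apply, densityMul_eq_zero_of_disjoint hμ iv hE hEd,
      densityMul_eq_zero_of_disjoint hν iu hE hEd, add_zero]
  rw [VectorMeasure.integral_add_vectorMeasure (SignedMeasure.integrable_testFunction _ φd φc)
      (SignedMeasure.integrable_testFunction _ φd φc), integral_densityMul_preciseRep hμ hd φd φc,
    integral_densityMul_preciseRep hν hc φd φc, setIntegral_mul_deriv_eq_integral _ φs]
  have hdc : Continuous (deriv φ) := φd.continuous_deriv (by simp)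
  have hdi : Integrable (deriv φ) := hdc.integrable_of_hasCompactSupport φc.deriv
  have hbdd : ∀ (ρ : SignedMeasure ℝ) {g : ℝ → ℝ}, Integrable g →
      Integrable fun t => ρ (Iic t) * g t := fun ρ g hg =>
    hg.bdd_mul (SignedMeasure.measurable_apply_Iic ρ).aestronglyMeasurable
      (.of_forall fun _ => VectorMeasure.norm_apply_le_bound)
  have e : ∫ x, u x * v x * deriv φ x =
      ∫ x, (c * d * deriv φ x + d * (μ (Iic x) * deriv φ x) + c * (ν (Iic x) * deriv φ x) +
        μ (Iic x) * (ν (Iic x) * deriv φ x)) := by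
    refine integral_congr_ae ?_
    filter_upwards [hc, hd] with x hx hy
    by_cases hxI : x ∈ interior I
    · simp only [hx hxI, hy hxI]
      ring
    · have : deriv φ x = 0 := by
        by_contra h
        exact hxI (φs (support_deriv_subset h))
      simp [this]
  have h0 : ∫ x, deriv φ x = 0 :=
    integral_eq_zero_of_hasDerivAt_of_integrable
      (fun x => (φd.differentiable (by simp) x).hasDerivAt) hdi
      (φd.continuous.integrable_of_hasCompactSupport φc)
  have I0 := hdi.const_mul (c * d)
  have I1 := (hbdd μ hdi).const_mul d
  have I2 := (hbdd ν hdi).const_mul c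
  have I3 := hbdd μ (hbdd ν hdi)
  have I01 : Integrable fun x => c * d * deriv φ x + d * (μ (Iic x) * deriv φ x) := I0.add I1
  have I012 : Integrable fun x => c * d * deriv φ x + d * (μ (Iic x) * deriv φ x) +
      c * (ν (Iic x) * deriv φ x) := I01.add I2
  rw [e, integral_add I012 I3, integral_add I01 I2, integral_add I0 I1,
    integral_const_mul, integral_const_mul, integral_const_mul, h0,
    SignedMeasure.integral_primitive_mul_deriv μ φd φc,
    SignedMeasure.integral_primitive_mul_deriv ν φd φc]
  simp_rw [← mul_assoc]
  rw [SignedMeasure.integral_primitive_mul_primitive_mul_deriv μ ν φd φc]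
  ring

theorem integrableOn_mul_of_isDistribDeriv {I : Set ℝ} (hI : I.OrdConnected) {u v : ℝ → ℝ}
    (hu : IntegrableOn u I) (hv : IntegrableOn v I) {ν : SignedMeasure ℝ}
    (hν : IsDistribDeriv I v ν) : IntegrableOn (fun x => u x * v x) I := by
  obtain ⟨d, hd⟩ := hν.exists_ae_eq_primitive hI hv
  refine Integrable.mul_bdd (c := ‖d‖ + ν.bound) hu hv.aestronglyMeasurable ?_
  have hfr : ∀ᵐ x, x ∉ frontier I := by
    rw [ae_iff]; simpa using hI.convex.addHaar_frontier volume
  rw [ae_restrict_iff' hI.measurableSet]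
  filter_upwards [hd, hfr] with x hx hxf hxI
  have hxi : x ∈ interior I := by
    by_contra h
    exact hxf ⟨subset_closure hxI, h⟩
  rw [hx hxi]
  grw [norm_add_le, VectorMeasure.norm_apply_le_bound]

/-- **Leibniz rule for BV functions.** If `u, v ∈ BV(I)` then `uv ∈ BV(I)` and
`(uv)' = u' ⟨v⟩ + ⟨u⟩ v'` as signed measures, where both products on the right are well defined. -/
theorem leibniz_rule_BV (I : Set ℝ) (hI : I.OrdConnected) (u v : ℝ → ℝ)
    (hu : MemBV I u) (hv : MemBV I v) :
    MemBV I (fun x => u x * v x) ∧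
    ∀ Du Dv Duv : SignedMeasure ℝ,
      IsDistribDeriv I u Du → IsDistribDeriv I v Dv →
      IsDistribDeriv I (fun x => u x * v x) Duv →
      VectorMeasure.Integrable Du (preciseRep I v) ∧
      VectorMeasure.Integrable Dv (preciseRep I u) ∧
      Duv = densityMul (preciseRep I v) Du + densityMul (preciseRep I u) Dv := by
  obtain ⟨hui, μ, hμ⟩ := hu
  obtain ⟨hvi, ν, hν⟩ := hv
  refine ⟨⟨integrableOn_mul_of_isDistribDeriv hI hui hvi hν, _, (hμ.mul hI hui hvi hν).2.2⟩, ?_⟩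
  intro Du Dv Duv hDu hDv hDuv
  obtain ⟨h1, h2, h3⟩ := hDu.mul hI hui hvi hDv
  exact ⟨h1, h2, hDuv.unique h3⟩
end

section
/- (Limit profiles as $\mu\to+\infty$.) Let $g:[0,\infty)\to[0,\infty)$ be continuous with $g(0)=0$, $g(s)>0$ for all $s>0$, $\lim_{s\to0^+}g(s)/s=0$ and $\lim_{s\to+\infty}g(s)/s=+\infty$; extend $g$ to $\mathbb R$ by $g(s)=0$ for $s\le 0$. Let $a<b$, let $h\in L^1([a,b])$, and put $h^{\pm}:=|h|/2\pm h/2$. Suppose that there are $m\ge1$ and points $$a=\tau_0\le\sigma_1<\tau_1<\sigma_2<\tau_2<\cdots<\sigma_m<\tau_m\le\sigma_{m+1}=b$$ such that, for every $i\in\{1,\dots,m\}$, $h\ge0$ a.e. and $h\not\equiv0$ on $I_i^+:=[\sigma_i,\tau_i]$, and, for every $i\in\{0,\dots,m\}$, $h\le0$ a.e. on $I_i^-:=[\tau_i,\sigma_{i+1}]$ and $h\not\equiv0$ on $I_i^-$ whenever this interval is nondegenerate (here $h\not\equiv 0$ means that $h$ is not a.e. zero). Suppose moreover that, for every $i\in\{1,\dots,m\}$,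 $h\not\equiv0$ on every left neighborhood of $\sigma_i$ in $[a,b]$ if $\sigma_i>a$, and $h\not\equiv0$ on every right neighborhood of $\tau_i$ in $[a,b]$ if $\tau_i<b$. For $\mu>0$ consider the problem $$(D_\mu)\qquad u''+\bigl(h^+(t)-\mu h^-(t)\bigr)g(u)=0,\qquad u(a)=0=u(b).$$ Solutions of this and of the problems below are understood in the Carathéodory sense on the compact interval under consideration: $u$ is differentiable there (one-sidedly at the end points), $u'$ is absolutely continuous, and the equation holds a.e. A solution is positive if it is $>0$ in the interior of the interval. Assume that $R>0$ and $\mu^*>0$ are such that every positive solution $u$ of $(D_\mu)$ with $\mu>\mu^*$ satisfies $\|u\|_\infty<R$. Let $(\mu_n)_n\subseteq(\mu^*,+\infty)$ with $\mu_n\to+\infty$, and for each $n$ let $u_{\mu_n}$ be a positive solution of $(D_{\mu_n})$. Then there exists a continuous function $u_\infty:[a,b]\to[0,\infty)$ such that, after passing to a subsequence, $u_{\mu_n}\to u_\infty$ uniformly on $[a,b]$; moreover $u_\infty\equiv0$ on $I_i^-$ for every $i\in\{0,\dots,m\}$ and, for every $i\in\{1,\dots,m\}$, the restriction of $u_\infty$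 to $I_i^+$ is a non-negative solution on $I_i^+$ of the limit problem $$u''+h^+(t)g(u)=0,\qquad u(\sigma_i)=0=u(\tau_i).$$ Suppose in addition that $0<r<R$ is small enough that, for each $i\in\{1,\dots,m\}$, the only non-negative solution of the limit problem on $I_i^+$ with maximum $\le r$ is the zero solution, and that, for some nonempty $\mathcal I\subseteq\{1,\dots,m\}$, all $u_{\mu_n}$ belong to $$\Lambda^{\mathcal I}:=\Bigl\{u\in C([a,b]) : r<\max_{I_i^+}|u|<R \text{ for } i\in\mathcal I,\ \max_{I_i^+}|u|<r \text{ for } i\in\{1,\dots,m\}\setminus\mathcal I\Bigr\}.$$ Then $u_\infty\equiv0$ on $I_i^+$ for every $i\in\{1,\dots,m\}\setminus\mathcal I$, and for every $i\in\mathcal I$ the restriction of $u_\infty$ to $I_i^+$ is a positive solution of the limit problem. -/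
open Set MeasureTheory Filter Topology

/-- `u` is a Carathéodory solution of `u'' + F(t, u) = 0` on `[a,b]`: it is differentiable on `[a,b]`
(one-sidedly at the end points), its derivative is absolutely continuous on `[a,b]`, and the
equation holds almost everywhere. Only the values of `u` on `[a,b]` matter. -/
def IsCaratheodorySol (a b : ℝ) (F : ℝ → ℝ → ℝ) (u : ℝ → ℝ) : Prop :=
  ∃ u' : ℝ → ℝ,
    (∀ t ∈ Icc a b, HasDerivWithinAt u (u' t) (Icc a b) t) ∧
    AbsolutelyContinuousOnInterval u' a b ∧
    ∀ᵐ t ∂volume.restrict (Icc a b), HasDerivWithinAt u' (-F t (u t)) (Icc a b) t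

/-- `u` solves the Dirichlet problem `u'' + q(t) g(u) = 0`, `u(a) = 0 = u(b)`. -/
def IsDirichletSol (a b : ℝ) (q g u : ℝ → ℝ) : Prop :=
  IsCaratheodorySol a b (fun t x => q t * g x) u ∧ u a = 0 ∧ u b = 0

/-- Non-negative solution of the Dirichlet problem. -/
def IsNonnegDirichletSol (a b : ℝ) (q g u : ℝ → ℝ) : Prop :=
  IsDirichletSol a b q g u ∧ ∀ t ∈ Icc a b, 0 ≤ u t

/-- Positive solution of the Dirichlet problem: positive in the open interval. -/
def IsPosDirichletSol (a b : ℝ) (q g u : ℝ → ℝ) : Prop :=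
  IsDirichletSol a b q g u ∧ ∀ t ∈ Ioo a b, 0 < u t

/-- The positive part `h⁺ = |h|/2 + h/2` of a weight. -/
noncomputable def posW (h : ℝ → ℝ) : ℝ → ℝ := fun t => |h t| / 2 + h t / 2

/-- The negative part `h⁻ = |h|/2 - h/2` of a weight. -/
noncomputable def negW (h : ℝ → ℝ) : ℝ → ℝ := fun t => |h t| / 2 - h t / 2

/-- The weight `h⁺ - μ h⁻`. -/
noncomputable def muW (h : ℝ → ℝ) (μ : ℝ) : ℝ → ℝ := fun t => posW h t - μ * negW h t

/-- `h = 0` almost everywhere on `s`. -/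
def VanishesOn (h : ℝ → ℝ) (s : Set ℝ) : Prop := ∀ᵐ t ∂volume.restrict s, h t = 0

/-- The sign condition on `h`, with
`a = τ 0 ≤ σ 1 < τ 1 < ⋯ < σ m < τ m ≤ σ (m+1) = b`; the values `σ 0` and `σ i`, `τ (i-1)` with
`i > m + 1` play no role. The positivity intervals are `[σ i, τ i]`, `1 ≤ i ≤ m`, the negativity
intervals `[τ i, σ (i+1)]`, `0 ≤ i ≤ m`; of the latter the first and the last may be degenerate.
A point `σ i = a` has no left neighborhoods, and a point `τ i = b` no right neighborhoods,
in `[a,b]`. -/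
structure SignCondition (a b : ℝ) (h : ℝ → ℝ) (m : ℕ) (σ τ : ℕ → ℝ) : Prop where
  one_le : 1 ≤ m
  left_end : τ 0 = a
  right_end : σ (m + 1) = b
  first_le : τ 0 ≤ σ 1
  last_le : τ m ≤ σ (m + 1)
  pos_lt : ∀ i, 1 ≤ i → i ≤ m → σ i < τ i
  neg_lt : ∀ i, 1 ≤ i → i < m → τ i < σ (i + 1)
  nonneg : ∀ i, 1 ≤ i → i ≤ m → ∀ᵐ t ∂volume.restrict (Icc (σ i) (τ i)), 0 ≤ h t
  pos_nontrivial : ∀ i, 1 ≤ i → i ≤ m → ¬ VanishesOn h (Icc (σ i) (τ i))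
  nonpos : ∀ i, i ≤ m → ∀ᵐ t ∂volume.restrict (Icc (τ i) (σ (i + 1))), h t ≤ 0
  neg_nontrivial : ∀ i, i ≤ m → τ i < σ (i + 1) → ¬ VanishesOn h (Icc (τ i) (σ (i + 1)))
  left_nhds : ∀ i, 1 ≤ i → i ≤ m → a < σ i → ∀ δ > (0 : ℝ),
    ¬ VanishesOn h (Icc (σ i - δ) (σ i) ∩ Icc a b)
  right_nhds : ∀ i, 1 ≤ i → i ≤ m → τ i < b → ∀ δ > (0 : ℝ),
    ¬ VanishesOn h (Icc (τ i) (τ i + δ) ∩ Icc a b)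

/-- The maximum of `|u|` on `[c,d]` (attained when `u` is continuous on `[c,d]` and `c ≤ d`). -/
noncomputable def maxAbs (u : ℝ → ℝ) (c d : ℝ) : ℝ := sSup ((fun t => |u t|) '' Icc c d)

/-- The set `Λ^𝓘` of continuous functions on `[a,b]` that are large on `[σ i, τ i]` for `i ∈ 𝓘`
and small on the other positivity intervals. -/
def LambdaSet (a b : ℝ) (m : ℕ) (σ τ : ℕ → ℝ) (r R : ℝ) (𝓘 : Finset ℕ) : Set (ℝ → ℝ) :=
  {u | ContinuousOn u (Icc a b) ∧
    (∀ i ∈ 𝓘, r < maxAbs u (σ i) (τ i) ∧ maxAbs u (σ i) (τ i) < R) ∧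
    ∀ i ∈ Finset.Icc 1 m \ 𝓘, maxAbs u (σ i) (τ i) < r}

/-! ### Arzelà–Ascoli for uniformly Lipschitz sequences -/

/-- A uniformly bounded, uniformly Lipschitz sequence on a compact interval has a uniformly
convergent subsequence. -/
theorem exists_subseq_tendstoUniformlyOn_of_lipschitz {a b R : ℝ} (hab : a ≤ b) {K : NNReal}
    {f : ℕ → ℝ → ℝ} (hf : ∀ n, LipschitzOnWith K (f n) (Icc a b))
    (hR : ∀ n, ∀ t ∈ Icc a b, |f n t| ≤ R) :
    ∃ φ : ℕ → ℕ, StrictMono φ ∧ ∃ v : ℝ → ℝ, ContinuousOn v (Icc a b) ∧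
      TendstoUniformlyOn (fun k => f (φ k)) v atTop (Icc a b) := by
  let G : ℕ → BoundedContinuousFunction (Icc a b) ℝ := fun n =>
    BoundedContinuousFunction.mkOfCompact
      ⟨(Icc a b).domRestrict (f n), (hf n).continuousOn.domRestrict⟩
  have hG : ∀ n x, G n x = f n x := fun n x => rfl
  have hcomp : IsCompact (closure (range G)) := by
    refine BoundedContinuousFunction.arzela_ascoli (Icc (-R) R) isCompact_Icc _ ?_ ?_
    · rintro _ x ⟨n, rfl⟩
      exact abs_le.1 (hR n x x.2)
    · refine (LipschitzWith.uniformEquicontinuous _ K ?_).equicontinuous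
      rintro ⟨_, n, rfl⟩
      exact (hf n).to_restrict
  obtain ⟨w, -, φ, hφ, hw⟩ := hcomp.tendsto_subseq (fun n => subset_closure (mem_range_self n))
  refine ⟨φ, hφ, IccExtend hab w, (w.continuous.Icc_extend').continuousOn, ?_⟩
  rw [BoundedContinuousFunction.tendsto_iff_tendstoUniformly, Metric.tendstoUniformly_iff] at hw
  rw [Metric.tendstoUniformlyOn_iff]
  intro ε hε
  filter_upwards [hw ε hε] with k hk t ht
  rw [IccExtend_of_mem hab _ ht]
  exact hk ⟨t, ht⟩

/-! ### The first integral of the equation -/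

/-- The derivative of a Carathéodory solution is the primitive of the nonlinearity. -/
theorem deriv_sub_eq_neg_integral {a b : ℝ} {F : ℝ → ℝ → ℝ} {u u' : ℝ → ℝ}
    (hac : AbsolutelyContinuousOnInterval u' a b)
    (hae : ∀ᵐ t ∂volume.restrict (Icc a b), HasDerivWithinAt u' (-F t (u t)) (Icc a b) t)
    {s t : ℝ} (has : a ≤ s) (hst : s ≤ t) (htb : t ≤ b) :
    u' t - u' s = -∫ x in s..t, F x (u x) := by
  have hac' : AbsolutelyContinuousOnInterval u' s t :=
    hac.mono (by rw [uIcc_of_le hst, uIcc_of_le (by linarith)]; exact Icc_subset_Icc has htb)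
  rw [← hac'.integral_deriv_eq_sub, ← intervalIntegral.integral_neg]
  refine intervalIntegral.integral_congr_ae ?_
  rw [ae_restrict_iff' measurableSet_Icc] at hae
  filter_upwards [hae, Measure.ae_ne volume b] with x hx hxb hxm
  rw [uIoc_of_le hst] at hxm
  have h1 : a < x := has.trans_lt hxm.1
  have h2 : x < b := lt_of_le_of_ne (hxm.2.trans htb) hxb
  exact ((hx ⟨h1.le, h2.le⟩).hasDerivAt (Icc_mem_nhds h1 h2)).deriv

/-- A function with a derivative on `[a,b]` is differentiable in the interior. -/
theorem hasDerivAt_of_hasDerivWithinAt_Icc {c d : ℝ} {u u' : ℝ → ℝ}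
    (hd : ∀ t ∈ Icc c d, HasDerivWithinAt u (u' t) (Icc c d) t) :
    ∀ t ∈ Ioo c d, HasDerivAt u (u' t) t := fun t ht =>
  (hd t (Ioo_subset_Icc_self ht)).hasDerivAt (Icc_mem_nhds ht.1 ht.2)

theorem concaveOn_Icc_of_antitoneOn_deriv {c d : ℝ} {u u' : ℝ → ℝ}
    (hd : ∀ t ∈ Icc c d, HasDerivWithinAt u (u' t) (Icc c d) t)
    (hm : AntitoneOn u' (Icc c d)) : ConcaveOn ℝ (Icc c d) u := by
  have hd' := hasDerivAt_of_hasDerivWithinAt_Icc hd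
  refine AntitoneOn.concaveOn_of_deriv (convex_Icc c d)
    (fun t ht => (hd t ht).continuousWithinAt) ?_ ?_
  · rw [interior_Icc]
    exact fun t ht => (hd' t ht).differentiableAt.differentiableWithinAt
  · rw [interior_Icc]
    intro s hs t ht hst
    rw [(hd' s hs).deriv, (hd' t ht).deriv]
    exact hm (Ioo_subset_Icc_self hs) (Ioo_subset_Icc_self ht) hst

theorem convexOn_Icc_of_monotoneOn_deriv {c d : ℝ} {u u' : ℝ → ℝ}
    (hd : ∀ t ∈ Icc c d, HasDerivWithinAt u (u' t) (Icc c d) t)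
    (hm : MonotoneOn u' (Icc c d)) : ConvexOn ℝ (Icc c d) u := by
  have := concaveOn_Icc_of_antitoneOn_deriv (u := -u) (u' := -u')
    (fun t ht => (hd t ht).neg) hm.neg
  exact neg_concaveOn_iff.1 this

/-- A non-negative concave function that vanishes at an interior point vanishes identically. -/
theorem ConcaveOn.eq_zero_of_nonneg {c d : ℝ} {u : ℝ → ℝ} (hu : ConcaveOn ℝ (Icc c d) u)
    (h0 : ∀ t ∈ Icc c d, 0 ≤ u t) {t₀ : ℝ} (ht₀ : t₀ ∈ Ioo c d) (hz : u t₀ = 0) :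
    ∀ t ∈ Icc c d, u t = 0 := by
  have hcd : c ≤ d := (ht₀.1.trans ht₀.2).le
  intro t ht
  refine le_antisymm ?_ (h0 t ht)
  rcases le_total t₀ t with h | h
  · exact (hu.right_le_of_le_left'' (left_mem_Icc.2 hcd) ht ht₀.1 h
      (hz.trans_le (h0 c (left_mem_Icc.2 hcd)))).trans_eq hz
  · exact (hu.left_le_of_le_right'' ht (right_mem_Icc.2 hcd) h ht₀.2
      (hz.trans_le (h0 d (right_mem_Icc.2 hcd)))).trans_eq hz

/-- A Carathéodory solution of `u'' + q(t) g(u) = 0` with `q ≥ 0` and `g ≥ 0` is concave. -/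
theorem IsCaratheodorySol.concaveOn {c d : ℝ} {q g u : ℝ → ℝ}
    (hu : IsCaratheodorySol c d (fun t x => q t * g x) u)
    (hq : ∀ t, 0 ≤ q t) (hg : ∀ s, 0 ≤ g s) : ConcaveOn ℝ (Icc c d) u := by
  obtain ⟨u', hd, hac, hae⟩ := hu
  refine concaveOn_Icc_of_antitoneOn_deriv hd fun s hs t ht hst => ?_
  have h1 := deriv_sub_eq_neg_integral hac hae hs.1 hst ht.2
  have h2 : 0 ≤ ∫ x in s..t, q x * g (u x) :=
    intervalIntegral.integral_nonneg hst fun x _ => mul_nonneg (hq x) (hg _)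
  linarith

/-! ### Derivative bounds -/

/-- If a function with values in `[0,R]` has a derivative that oscillates by at most `V`, then the
derivative is bounded by `R/(d-c) + V`. -/
theorem abs_deriv_le_of_oscillation_le {c d R V : ℝ} (hcd : c < d) {u u' : ℝ → ℝ}
    (hd : ∀ t ∈ Icc c d, HasDerivWithinAt u (u' t) (Icc c d) t)
    (hu : ∀ t ∈ Icc c d, 0 ≤ u t ∧ u t ≤ R)
    (hV : ∀ s ∈ Icc c d, ∀ t ∈ Icc c d, s ≤ t → |u' t - u' s| ≤ V) :
    ∀ t ∈ Icc c d, |u' t| ≤ R / (d - c) + V := by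
  obtain ⟨x, hx, hxs⟩ := exists_hasDerivAt_eq_slope u u' hcd
    (fun t ht => (hd t ht).continuousWithinAt) (hasDerivAt_of_hasDerivWithinAt_Icc hd)
  have hx' := Ioo_subset_Icc_self hx
  have hslope : |u' x| ≤ R / (d - c) := by
    have hpos : 0 < d - c := sub_pos.2 hcd
    rw [hxs, abs_div, abs_of_pos hpos]
    have h1 := hu c (left_mem_Icc.2 hcd.le)
    have h2 := hu d (right_mem_Icc.2 hcd.le)
    gcongr
    rw [abs_le]
    constructor <;> linarith
  intro t ht
  have hosc : |u' t - u' x| ≤ V := by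
    rcases le_total x t with h | h
    · exact hV x hx' t ht h
    · rw [abs_sub_comm]
      exact hV t ht x hx' h
  have := abs_add_le (u' x) (u' t - u' x)
  rw [add_sub_cancel] at this
  linarith

theorem deriv_left_nonneg {a b : ℝ} (hab : a < b) {u : ℝ → ℝ} {p : ℝ}
    (hd : HasDerivWithinAt u p (Icc a b) a) (h0 : u a = 0) (hu : ∀ t ∈ Icc a b, 0 ≤ u t) :
    0 ≤ p := by
  have hd' : HasDerivWithinAt u p (Ioo a b) a := hd.mono Ioo_subset_Icc_self
  rw [hasDerivWithinAt_iff_tendsto_slope' (by simp)] at hd'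
  have : (𝓝[Ioo a b] a).NeBot := by rw [nhdsWithin_Ioo_eq_nhdsGT hab]; infer_instance
  refine ge_of_tendsto hd' ?_
  filter_upwards [self_mem_nhdsWithin] with t ht
  rw [slope_def_field, h0, sub_zero]
  exact div_nonneg (hu t (Ioo_subset_Icc_self ht)) (sub_nonneg.2 ht.1.le)

theorem deriv_right_nonpos {a b : ℝ} (hab : a < b) {u : ℝ → ℝ} {p : ℝ}
    (hd : HasDerivWithinAt u p (Icc a b) b) (h0 : u b = 0) (hu : ∀ t ∈ Icc a b, 0 ≤ u t) :
    p ≤ 0 := by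
  have hd' : HasDerivWithinAt u p (Ioo a b) b := hd.mono Ioo_subset_Icc_self
  rw [hasDerivWithinAt_iff_tendsto_slope' (by simp)] at hd'
  have : (𝓝[Ioo a b] b).NeBot := by rw [nhdsWithin_Ioo_eq_nhdsLT hab]; infer_instance
  refine le_of_tendsto hd' ?_
  filter_upwards [self_mem_nhdsWithin] with t ht
  rw [slope_def_field, h0, sub_zero]
  exact div_nonpos_of_nonneg_of_nonpos (hu t (Ioo_subset_Icc_self ht)) (sub_nonpos.2 ht.2.le)

/-! ### Weights -/

theorem posW_nonneg (h : ℝ → ℝ) (t : ℝ) : 0 ≤ posW h t := by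
  unfold posW
  linarith [neg_abs_le (h t)]

theorem negW_nonneg (h : ℝ → ℝ) (t : ℝ) : 0 ≤ negW h t := by
  unfold negW
  linarith [le_abs_self (h t)]

theorem posW_le_abs (h : ℝ → ℝ) (t : ℝ) : posW h t ≤ |h t| := by
  unfold posW
  linarith [le_abs_self (h t)]

theorem muW_of_nonneg {h : ℝ → ℝ} {t : ℝ} (μ : ℝ) (ht : 0 ≤ h t) : muW h μ t = posW h t := by
  simp [muW, posW, negW, abs_of_nonneg ht]

theorem muW_of_nonpos {h : ℝ → ℝ} {t : ℝ} (μ : ℝ) (ht : h t ≤ 0) :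
    muW h μ t = -μ * negW h t := by
  simp only [muW, posW, negW, abs_of_nonpos ht]
  ring

theorem integrableOn_posW {h : ℝ → ℝ} {s : Set ℝ} (hh : IntegrableOn h s) :
    IntegrableOn (posW h) s :=
  (hh.abs.div_const 2).add (hh.div_const 2)

theorem integrableOn_negW {h : ℝ → ℝ} {s : Set ℝ} (hh : IntegrableOn h s) :
    IntegrableOn (negW h) s :=
  (hh.abs.div_const 2).sub (hh.div_const 2)

/-- The integral of `h⁻` is positive on an interval where `h ≤ 0` and `h` is not a.e. zero. -/
theorem integral_negW_pos {h : ℝ → ℝ} {c d : ℝ} (hcd : c ≤ d) (hh : IntegrableOn h (Icc c d))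
    (hneg : ∀ᵐ t ∂volume.restrict (Icc c d), h t ≤ 0) (hnt : ¬ VanishesOn h (Icc c d)) :
    0 < ∫ t in c..d, negW h t := by
  rw [intervalIntegral.integral_of_le hcd, ← integral_Icc_eq_integral_Ioc]
  have h0 : 0 ≤ᵐ[volume.restrict (Icc c d)] negW h := ae_of_all _ (negW_nonneg h)
  refine lt_of_le_of_ne (integral_nonneg_of_ae h0) fun h1 => hnt ?_
  have h2 := (setIntegral_eq_zero_iff_of_nonneg_ae h0 (integrableOn_negW hh)).1 h1.symm
  filter_upwards [h2, hneg] with t h3 h4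
  simp only [negW, abs_of_nonpos h4, Pi.zero_apply] at h3
  linarith

/-! ### The equation on the intervals of constant sign -/

theorem deriv_sub_eq_of_nonneg {a b c d μ : ℝ} {h g u u' : ℝ → ℝ}
    (hu' : ∀ s t, a ≤ s → s ≤ t → t ≤ b → u' t - u' s = -∫ x in s..t, muW h μ x * g (u x))
    (hac : a ≤ c) (hdb : d ≤ b) (hpos : ∀ᵐ t ∂volume.restrict (Icc c d), 0 ≤ h t)
    {s t : ℝ} (hs : c ≤ s) (hst : s ≤ t) (ht : t ≤ d) :
    u' t - u' s = -∫ x in s..t, posW h x * g (u x) := by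
  rw [hu' s t (hac.trans hs) hst (ht.trans hdb)]
  congr 1
  refine intervalIntegral.integral_congr_ae ?_
  rw [ae_restrict_iff' measurableSet_Icc] at hpos
  filter_upwards [hpos] with x hx hxm
  rw [uIoc_of_le hst] at hxm
  rw [muW_of_nonneg μ (hx ⟨hs.trans hxm.1.le, hxm.2.trans ht⟩)]

theorem deriv_sub_eq_of_nonpos {a b c d μ : ℝ} {h g u u' : ℝ → ℝ}
    (hu' : ∀ s t, a ≤ s → s ≤ t → t ≤ b → u' t - u' s = -∫ x in s..t, muW h μ x * g (u x))
    (hac : a ≤ c) (hdb : d ≤ b) (hneg : ∀ᵐ t ∂volume.restrict (Icc c d), h t ≤ 0)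
    {s t : ℝ} (hs : c ≤ s) (hst : s ≤ t) (ht : t ≤ d) :
    u' t - u' s = μ * ∫ x in s..t, negW h x * g (u x) := by
  rw [hu' s t (hac.trans hs) hst (ht.trans hdb), ← intervalIntegral.integral_const_mul,
    ← intervalIntegral.integral_neg]
  refine intervalIntegral.integral_congr_ae ?_
  rw [ae_restrict_iff' measurableSet_Icc] at hneg
  filter_upwards [hneg] with x hx hxm
  rw [uIoc_of_le hst] at hxm
  rw [muW_of_nonpos μ (hx ⟨hs.trans hxm.1.le, hxm.2.trans ht⟩)]
  ring

/-- On a positivity interval the derivative of a solution oscillates by at most `M ‖h‖₁`. -/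
theorem abs_integral_posW_mul_le {a b M s t : ℝ} {h f : ℝ → ℝ} (hh : IntegrableOn h (Icc a b))
    (has : a ≤ s) (hst : s ≤ t) (htb : t ≤ b) (hM : ∀ x ∈ Icc a b, |f x| ≤ M) :
    |∫ x in s..t, posW h x * f x| ≤ ∫ x in a..b, |h x| * M := by
  have hab : a ≤ b := has.trans (hst.trans htb)
  have hM0 : 0 ≤ M := (abs_nonneg _).trans (hM a (left_mem_Icc.2 hab))
  have hint : IntervalIntegrable (fun x => |h x| * M) volume a b :=
    (intervalIntegrable_iff_integrableOn_Icc_of_le hab).2 (hh.abs.mul_const M)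
  rw [← Real.norm_eq_abs]
  refine (intervalIntegral.norm_integral_le_of_norm_le (g := fun x => |h x| * M) hst
    (ae_of_all _ fun x hx => ?_) (hint.mono_set ?_)).trans
    (intervalIntegral.integral_mono_interval has hst htb
      (ae_of_all _ fun x => mul_nonneg (abs_nonneg _) hM0) hint)
  · rw [Real.norm_eq_abs, abs_mul, abs_of_nonneg (posW_nonneg h x)]
    exact mul_le_mul (posW_le_abs h x) (hM x ⟨has.trans hx.1.le, hx.2.trans htb⟩)
      (abs_nonneg _) (abs_nonneg _)
  · rw [uIcc_of_le hst, uIcc_of_le hab]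
    exact Icc_subset_Icc has htb

/-! ### The order of the nodes -/

namespace SignCondition

variable {a b : ℝ} {h : ℝ → ℝ} {m : ℕ} {σ τ : ℕ → ℝ}

theorem neg_le (H : SignCondition a b h m σ τ) {i : ℕ} (hi : i ≤ m) : τ i ≤ σ (i + 1) := by
  rcases Nat.eq_zero_or_pos i with rfl | h0
  · exact H.first_le
  · rcases hi.eq_or_lt with rfl | h1
    · exact H.last_le
    · exact (H.neg_lt i h0 h1).le

theorem neg_lt_of_lt_right (H : SignCondition a b h m σ τ) {i : ℕ} (h1 : 1 ≤ i) (hi : i ≤ m)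
    (hb : τ i < b) : τ i < σ (i + 1) := by
  rcases hi.eq_or_lt with rfl | h2
  · rwa [H.right_end]
  · exact H.neg_lt i h1 h2

theorem left_le_tau (H : SignCondition a b h m σ τ) : ∀ i, i ≤ m → a ≤ τ i
  | 0, _ => H.left_end.ge
  | i + 1, hi => (H.left_le_tau i (by omega)).trans
      ((H.neg_le (by omega)).trans (H.pos_lt (i + 1) (by omega) hi).le)

theorem left_le_sigma (H : SignCondition a b h m σ τ) {i : ℕ} (hi : i ≤ m) : a ≤ σ (i + 1) :=
  (H.left_le_tau i hi).trans (H.neg_le hi)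

theorem sigma_le_right (H : SignCondition a b h m σ τ) {i : ℕ} (hi : i ≤ m) :
    σ (i + 1) ≤ b := by
  induction hi using Nat.decreasingInduction with
  | self => exact H.right_end.le
  | of_succ k hk ih =>
    exact (H.pos_lt (k + 1) (by omega) (by omega)).le.trans ((H.neg_le (by omega)).trans ih)

theorem tau_le_right (H : SignCondition a b h m σ τ) {i : ℕ} (hi : i ≤ m) : τ i ≤ b :=
  (H.neg_le hi).trans (H.sigma_le_right hi)

theorem left_le_sigma' (H : SignCondition a b h m σ τ) {i : ℕ} (h1 : 1 ≤ i) (hi : i ≤ m) :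
    a ≤ σ i := by
  obtain ⟨j, rfl⟩ := Nat.exists_eq_add_of_le' h1
  exact H.left_le_sigma (by omega)

theorem neg_lt_of_left_lt (H : SignCondition a b h m σ τ) {i : ℕ} (hi : i < m)
    (ha : a < σ (i + 1)) : τ i < σ (i + 1) := by
  rcases Nat.eq_zero_or_pos i with rfl | h0
  · rwa [H.left_end]
  · exact H.neg_lt i h0 hi

/-- The sign intervals cover `[a,b]`. -/
theorem cover (H : SignCondition a b h m σ τ) {t : ℝ} (ht : t ∈ Icc a b) :
    (∃ i ≤ m, t ∈ Icc (τ i) (σ (i + 1))) ∨ ∃ i, 1 ≤ i ∧ i ≤ m ∧ t ∈ Icc (σ i) (τ i) := by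
  have key : ∀ j ≤ m, t ≤ τ j →
      (∃ i ≤ m, t ∈ Icc (τ i) (σ (i + 1))) ∨ ∃ i, 1 ≤ i ∧ i ≤ m ∧ t ∈ Icc (σ i) (τ i) := by
    intro j
    induction j with
    | zero =>
      intro _ h0
      exact Or.inl ⟨0, Nat.zero_le _, H.left_end.trans_le ht.1, h0.trans H.first_le⟩
    | succ k ih =>
      intro hk htk
      rcases le_total t (τ k) with h1 | h1
      · exact ih (by omega) h1
      rcases le_total t (σ (k + 1)) with h2 | h2
      · exact Or.inl ⟨k, by omega, h1, h2⟩
      · exact Or.inr ⟨k + 1, by omega, hk, h2, htk⟩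
  rcases le_total t (τ m) with h1 | h1
  · exact key m le_rfl h1
  · exact Or.inl ⟨m, le_rfl, h1, ht.2.trans_eq H.right_end.symm⟩

end SignCondition

/-! ### A priori bound for the derivative -/

/-- Solutions with values in `[0,R]` have derivatives bounded independently of `μ`. -/
theorem abs_deriv_le_of_signCondition {a b : ℝ} (hab : a < b) {h g : ℝ → ℝ} {m : ℕ}
    {σ τ : ℕ → ℝ} (H : SignCondition a b h m σ τ) (hh : IntegrableOn h (Icc a b))
    (hg : ∀ s, 0 ≤ g s) {R M μ : ℝ} (hR : 0 ≤ R) (hM : ∀ s ∈ Icc 0 R, |g s| ≤ M) (hμ : 0 ≤ μ)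
    {u u' : ℝ → ℝ} (hd : ∀ t ∈ Icc a b, HasDerivWithinAt u (u' t) (Icc a b) t)
    (hu' : ∀ s t, a ≤ s → s ≤ t → t ≤ b → u' t - u' s = -∫ x in s..t, muW h μ x * g (u x))
    (hu : ∀ t ∈ Icc a b, 0 ≤ u t ∧ u t ≤ R) (hua : u a = 0) (hub : u b = 0) :
    ∀ t ∈ Icc a b,
      |u' t| ≤ ∑ i ∈ Finset.Icc 1 m, R / (τ i - σ i) + ∫ x in a..b, |h x| * M := by
  set K := ∑ i ∈ Finset.Icc 1 m, R / (τ i - σ i) + ∫ x in a..b, |h x| * M with hK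
  have hM0 : 0 ≤ M := (abs_nonneg _).trans (hM 0 (left_mem_Icc.2 hR))
  have hterm : ∀ i ∈ Finset.Icc 1 m, 0 ≤ R / (τ i - σ i) := fun i hi => by
    rw [Finset.mem_Icc] at hi
    exact div_nonneg hR (sub_nonneg.2 (H.pos_lt i hi.1 hi.2).le)
  have hK0 : 0 ≤ K := add_nonneg (Finset.sum_nonneg hterm)
    (intervalIntegral.integral_nonneg hab.le fun x _ => mul_nonneg (abs_nonneg _) hM0)
  have hposK : ∀ i, 1 ≤ i → i ≤ m → ∀ t ∈ Icc (σ i) (τ i), |u' t| ≤ K := by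
    intro i h1 hi t ht
    have hsub : Icc (σ i) (τ i) ⊆ Icc a b :=
      Icc_subset_Icc (H.left_le_sigma' h1 hi) (H.tau_le_right hi)
    refine (abs_deriv_le_of_oscillation_le (H.pos_lt i h1 hi)
      (fun t ht => (hd t (hsub ht)).mono hsub) (fun t ht => hu t (hsub ht))
      (V := ∫ x in a..b, |h x| * M) ?_ t ht).trans ?_
    · intro x hx y hy hxy
      rw [deriv_sub_eq_of_nonneg hu' (H.left_le_sigma' h1 hi) (H.tau_le_right hi)
        (H.nonneg i h1 hi) hx.1 hxy hy.2, abs_neg]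
      exact abs_integral_posW_mul_le hh (hsub hx).1 hxy (hsub hy).2
        fun z hz => hM _ (hu z hz)
    · rw [hK]
      gcongr
      exact Finset.single_le_sum hterm (Finset.mem_Icc.2 ⟨h1, hi⟩)
  intro t ht
  rcases H.cover ht with ⟨i, hi, hti⟩ | ⟨i, h1, hi, hti⟩
  · have hmono : ∀ x y, τ i ≤ x → x ≤ y → y ≤ σ (i + 1) → u' x ≤ u' y := by
      intro x y hx hxy hy
      have h2 := deriv_sub_eq_of_nonpos hu' (H.left_le_tau i hi) (H.sigma_le_right hi)
        (H.nonpos i hi) hx hxy hy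
      have h3 : 0 ≤ ∫ x in x..y, negW h x * g (u x) :=
        intervalIntegral.integral_nonneg hxy fun z _ => mul_nonneg (negW_nonneg h z) (hg _)
      have := mul_nonneg hμ h3
      linarith
    have hleft : -K ≤ u' (τ i) := by
      rcases Nat.eq_zero_or_pos i with rfl | h0
      · rw [H.left_end]
        exact (neg_nonpos.2 hK0).trans (deriv_left_nonneg hab (hd a (left_mem_Icc.2 hab.le)) hua
          fun t ht => (hu t ht).1)
      · exact (abs_le.1 (hposK i h0 hi _ (right_mem_Icc.2 (H.pos_lt i h0 hi).le))).1
    have hright : u' (σ (i + 1)) ≤ K := by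
      rcases hi.eq_or_lt with rfl | h0
      · rw [H.right_end]
        exact (deriv_right_nonpos hab (hd b (right_mem_Icc.2 hab.le)) hub
          fun t ht => (hu t ht).1).trans hK0
      · exact (abs_le.1 (hposK (i + 1) (by omega) h0 _
          (left_mem_Icc.2 (H.pos_lt (i + 1) (by omega) h0).le))).2
    exact abs_le.2 ⟨hleft.trans (hmono _ _ le_rfl hti.1 hti.2),
      (hmono _ _ hti.1 hti.2 le_rfl).trans hright⟩
  · exact hposK i h1 hi t hti

/-! ### Passage to the limit -/

/-- The limit cannot be bounded away from zero on an interval where `h ≤ 0`, `h ≢ 0`: otherwise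
the derivatives would blow up as `μ → +∞`. -/
theorem false_of_limit_pos {c d R K ε : ℝ} (hcd : c ≤ d) {h g : ℝ → ℝ}
    (hh : IntegrableOn h (Icc c d)) (hg : Continuous g) (hgpos : ∀ s > 0, 0 < g s)
    (hneg : ∀ᵐ t ∂volume.restrict (Icc c d), h t ≤ 0) (hnt : ¬ VanishesOn h (Icc c d))
    {μ : ℕ → ℝ} (hμ : Tendsto μ atTop atTop) {u u' : ℕ → ℝ → ℝ} {v : ℝ → ℝ}
    (hcont : ∀ n, ContinuousOn (u n) (Icc c d))
    (huR : ∀ n, ∀ t ∈ Icc c d, u n t ≤ R)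
    (hK : ∀ n, ∀ t ∈ Icc c d, |u' n t| ≤ K)
    (heq : ∀ n, u' n d - u' n c = μ n * ∫ x in c..d, negW h x * g (u n x))
    (hlim : TendstoUniformlyOn u v atTop (Icc c d)) (hε : 0 < ε)
    (hv : ∀ t ∈ Icc c d, 2 * ε ≤ v t) : False := by
  have hlow : ∀ᶠ n in atTop, ∀ t ∈ Icc c d, ε ≤ u n t := by
    filter_upwards [Metric.tendstoUniformlyOn_iff.1 hlim ε hε] with n hn t ht
    have h1 := hn t ht
    rw [Real.dist_eq] at h1
    linarith [(abs_lt.1 h1).2, hv t ht]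
  obtain ⟨n₀, hn₀⟩ := hlow.exists
  have hεR : ε ≤ R :=
    (hn₀ c (left_mem_Icc.2 hcd)).trans (huR n₀ c (left_mem_Icc.2 hcd))
  obtain ⟨s₀, hs₀, hmin⟩ := isCompact_Icc.exists_isMinOn (nonempty_Icc.2 hεR) hg.continuousOn
  have hη : 0 < g s₀ := hgpos s₀ (hε.trans_le hs₀.1)
  have hI := integral_negW_pos hcd hh hneg hnt
  set I := ∫ t in c..d, negW h t with hIdef
  have hbig : ∀ᶠ n in atTop, 2 * K / (I * g s₀) < μ n := hμ.eventually_gt_atTop _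
  obtain ⟨n, hn1, hn2, hn3⟩ := (hlow.and (hbig.and (hμ.eventually_ge_atTop 0))).exists
  have hnI := integrableOn_negW hh
  have h1 : I * g s₀ ≤ ∫ x in c..d, negW h x * g (u n x) := by
    rw [hIdef, ← intervalIntegral.integral_mul_const]
    refine intervalIntegral.integral_mono_on hcd
      ((intervalIntegrable_iff_integrableOn_Icc_of_le hcd).2 (hnI.mul_const _))
      ((intervalIntegrable_iff_integrableOn_Icc_of_le hcd).2
        (hnI.mul_continuousOn (hg.comp_continuousOn (hcont n)) isCompact_Icc)) fun x hx => ?_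
    exact mul_le_mul_of_nonneg_left (hmin ⟨hn1 x hx, huR n x hx⟩) (negW_nonneg h x)
  have h2 : μ n * (I * g s₀) ≤ 2 * K := by
    have h3 := abs_le.1 (hK n c (left_mem_Icc.2 hcd))
    have h4 := abs_le.1 (hK n d (right_mem_Icc.2 hcd))
    have h5 := mul_le_mul_of_nonneg_left h1 hn3
    rw [← heq n] at h5
    linarith
  rw [div_lt_iff₀ (mul_pos hI hη)] at hn2
  linarith

/-- The uniform limit of solutions of `u'' + q(t) g(u) = 0` with bounded derivatives is again a
solution. -/
theorem isCaratheodorySol_of_tendstoUniformlyOn {c d R K : ℝ} (hcd : c < d) {q g : ℝ → ℝ}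
    (hq : IntegrableOn q (Icc c d)) (hg : Continuous g) {u u' : ℕ → ℝ → ℝ} {v : ℝ → ℝ}
    (hd : ∀ n, ∀ t ∈ Icc c d, HasDerivWithinAt (u n) (u' n t) (Icc c d) t)
    (huR : ∀ n, ∀ t ∈ Icc c d, u n t ∈ Icc 0 R)
    (hK : ∀ n, ∀ t ∈ Icc c d, |u' n t| ≤ K)
    (heq : ∀ n, ∀ t ∈ Icc c d, u' n t - u' n c = -∫ x in c..t, q x * g (u n x))
    (hlim : TendstoUniformlyOn u v atTop (Icc c d)) :
    IsCaratheodorySol c d (fun t x => q t * g x) v := by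
  have hcont : ∀ n, ContinuousOn (u n) (Icc c d) :=
    fun n t ht => (hd n t ht).continuousWithinAt
  have hvcont : ContinuousOn v (Icc c d) := hlim.continuousOn (Frequently.of_forall hcont)
  obtain ⟨M, hM⟩ := isCompact_Icc.exists_bound_of_continuousOn (hg.continuousOn (s := Icc 0 R))
  have hint : ∀ w : ℝ → ℝ, ContinuousOn w (Icc c d) →
      IntegrableOn (fun x => q x * g (w x)) (Icc c d) := fun w hw =>
    hq.mul_continuousOn (hg.comp_continuousOn hw) isCompact_Icc
  have hII : IntervalIntegrable (fun x => q x * g (v x)) volume c d :=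
    (intervalIntegrable_iff_integrableOn_Icc_of_le hcd.le).2 (hint v hvcont)
  have hF : ∀ t ∈ Icc c d, Tendsto (fun n => ∫ x in c..t, q x * g (u n x)) atTop
      (𝓝 (∫ x in c..t, q x * g (v x))) := by
    intro t ht
    have hsub : uIoc c t ⊆ Icc c d := by
      rw [uIoc_of_le ht.1]
      exact fun x hx => ⟨hx.1.le, hx.2.trans ht.2⟩
    refine intervalIntegral.tendsto_integral_filter_of_dominated_convergence
      (fun x => |q x| * M) (Eventually.of_forall fun n => ?_) (Eventually.of_forall fun n => ?_)
      ?_ ?_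
    · exact ((hint _ (hcont n)).mono_set hsub).aestronglyMeasurable
    · refine ae_of_all _ fun x hx => ?_
      rw [norm_mul, Real.norm_eq_abs (q x)]
      exact mul_le_mul_of_nonneg_left (hM _ (huR n x (hsub hx))) (abs_nonneg _)
    · exact (intervalIntegrable_iff_integrableOn_Icc_of_le ht.1).2
        (IntegrableOn.mono_set (hq.abs.mul_const M) (Icc_subset_Icc_right ht.2))
    · exact ae_of_all _ fun x hx =>
        ((hg.tendsto _).comp (hlim.tendsto_at (hsub hx))).const_mul _
  have hcm : c ∈ Icc c d := left_mem_Icc.2 hcd.le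
  obtain ⟨A, -, φ, hφ, hA⟩ := tendsto_subseq_of_bounded (x := fun n => u' n c)
    (Metric.isBounded_Icc (-K) K) fun n => abs_le.1 (hK n c hcm)
  set v' : ℝ → ℝ := fun t => A - ∫ x in c..t, q x * g (v x) with hv'
  have hlim' : ∀ t ∈ Icc c d, Tendsto (fun k => u' (φ k) t) atTop (𝓝 (v' t)) := by
    intro t ht
    have h1 := hA.sub ((hF t ht).comp hφ.tendsto_atTop)
    refine h1.congr fun k => ?_
    have := heq (φ k) t ht
    simp only [Function.comp_apply]
    linarith
  have hprim : ∀ w : ℝ → ℝ, ContinuousOn w (Icc c d) →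
      ContinuousOn (fun t => ∫ x in c..t, q x * g (w x)) (Icc c d) := by
    intro w hw
    have := intervalIntegral.continuousOn_primitive_interval (μ := volume) (a := c) (b := d)
      (f := fun x => q x * g (w x)) (by rw [uIcc_of_le hcd.le]; exact hint w hw)
    rwa [uIcc_of_le hcd.le] at this
  have hv'cont : ContinuousOn v' (Icc c d) := continuousOn_const.sub (hprim v hvcont)
  have hu'cont : ∀ n, ContinuousOn (u' n) (Icc c d) := fun n =>
    ((continuousOn_const (c := u' n c)).sub (hprim (u n) (hcont n))).congr
      fun t ht => by simp only [Pi.sub_apply]; linarith [heq n t ht]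
  have hvint : ∀ t ∈ Icc c d, v t = v c + ∫ x in c..t, v' x := by
    intro t ht
    have hsub : uIoc c t ⊆ Icc c d := by
      rw [uIoc_of_le ht.1]
      exact fun x hx => ⟨hx.1.le, hx.2.trans ht.2⟩
    have hsub' : Icc c t ⊆ Icc c d := Icc_subset_Icc_right ht.2
    have h1 : Tendsto (fun k => ∫ x in c..t, u' (φ k) x) atTop (𝓝 (∫ x in c..t, v' x)) := by
      refine intervalIntegral.tendsto_integral_filter_of_dominated_convergence
        (fun _ => K) (Eventually.of_forall fun n => ?_) (Eventually.of_forall fun n => ?_)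
        intervalIntegrable_const ?_
      · exact ((hu'cont (φ n)).mono hsub).aestronglyMeasurable measurableSet_uIoc
      · exact ae_of_all _ fun x hx => hK (φ n) x (hsub hx)
      · exact ae_of_all _ fun x hx => hlim' x (hsub hx)
    have h2 : Tendsto (fun k => u (φ k) t - u (φ k) c) atTop (𝓝 (v t - v c)) :=
      ((hlim.tendsto_at ht).sub (hlim.tendsto_at hcm)).comp hφ.tendsto_atTop
    have h3 : ∀ k, ∫ x in c..t, u' (φ k) x = u (φ k) t - u (φ k) c := fun k =>
      intervalIntegral.integral_eq_sub_of_hasDerivAt_of_le ht.1 ((hcont _).mono hsub')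
        (fun x hx => hasDerivAt_of_hasDerivWithinAt_Icc (hd (φ k)) x
          ⟨hx.1, hx.2.trans_le ht.2⟩)
        (ContinuousOn.intervalIntegrable_of_Icc ht.1 ((hu'cont _).mono hsub'))
    simp only [h3] at h1
    linarith [tendsto_nhds_unique h1 h2]
  refine ⟨v', ?_, ?_, ?_⟩
  · intro t ht
    have hw : Continuous (IccExtend hcd.le ((Icc c d).domRestrict v')) :=
      hv'cont.domRestrict.Icc_extend'
    have hwv : ∀ x ∈ Icc c d, IccExtend hcd.le ((Icc c d).domRestrict v') x = v' x :=
      fun x hx => IccExtend_of_mem hcd.le _ hx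
    set w := IccExtend hcd.le ((Icc c d).domRestrict v')
    have h1 : HasDerivAt (fun t => v c + ∫ x in c..t, w x) (w t) t :=
      (intervalIntegral.integral_hasDerivAt_right (hw.intervalIntegrable _ _)
        (hw.stronglyMeasurableAtFilter _ _) hw.continuousAt).const_add _
    rw [← hwv t ht]
    refine h1.hasDerivWithinAt.congr_of_mem (fun x hx => ?_) ht
    rw [hvint x hx]
    congr 1
    refine intervalIntegral.integral_congr fun y hy => ?_
    rw [uIcc_of_le hx.1] at hy
    exact (hwv y ⟨hy.1, hy.2.trans hx.2⟩).symm
  · have h1 : AbsolutelyContinuousOnInterval (fun _ : ℝ => A) c d :=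
      ((LipschitzWith.const A).lipschitzOnWith (s := uIcc c d)).absolutelyContinuousOnInterval
    exact h1.sub (hII.absolutelyContinuousOnInterval_intervalIntegral left_mem_uIcc)
  · rw [ae_restrict_iff' measurableSet_Icc]
    filter_upwards [hII.ae_hasDerivAt_integral] with t ht htm
    rw [uIcc_of_le hcd.le] at ht
    exact ((ht htm c hcm).const_sub A).hasDerivWithinAt

/-- The nonlinearity extended by zero is continuous on the whole line. -/
theorem continuous_of_continuousOn_Ici_of_eq_zero {g : ℝ → ℝ} (hg : ContinuousOn g (Ici 0))
    (hz : ∀ s ≤ (0 : ℝ), g s = 0) : Continuous g := by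
  have : g = fun s => g (max s 0) := by
    ext s
    rcases le_total s 0 with h | h
    · rw [max_eq_right h, hz s h, hz 0 le_rfl]
    · rw [max_eq_left h]
  rw [this]
  exact hg.comp_continuous (by fun_prop) fun s => le_max_right s 0

/-- **Limit profiles as `μ → +∞`.** -/
theorem limit_profiles
    (a b : ℝ) (hab : a < b)
    (g : ℝ → ℝ)
    (hg_cont : ContinuousOn g (Ici 0))
    (hg_pos : ∀ s > 0, 0 < g s)
    -- `g 0 = 0` and the extension of `g` by zero:
    (hg_ext : ∀ s ≤ (0 : ℝ), g s = 0)
    (hg_zero : Tendsto (fun s => g s / s) (𝓝[>] 0) (𝓝 0))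
    (hg_infty : Tendsto (fun s => g s / s) atTop atTop)
    (h : ℝ → ℝ) (hh_int : IntegrableOn h (Icc a b))
    (m : ℕ) (σ τ : ℕ → ℝ) (hh_sign : SignCondition a b h m σ τ)
    -- the constants `R` and `μ*` with `‖u‖_∞ < R` for all positive solutions with `μ > μ*`:
    (R μstar : ℝ) (hR : 0 < R) (hμstar : 0 < μstar)
    (hbound : ∀ μ > μstar, ∀ u : ℝ → ℝ, IsPosDirichletSol a b (muW h μ) g u →
      ∀ t ∈ Icc a b, |u t| < R)
    (μseq : ℕ → ℝ) (hμseq : ∀ n, μstar < μseq n)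
    (hμ_tendsto : Tendsto μseq atTop atTop)
    (U : ℕ → ℝ → ℝ)
    (hU : ∀ n, IsPosDirichletSol a b (muW h (μseq n)) g (U n)) :
    ∃ φ : ℕ → ℕ, StrictMono φ ∧ ∃ uinf : ℝ → ℝ,
      ContinuousOn uinf (Icc a b) ∧
      (∀ t ∈ Icc a b, 0 ≤ uinf t) ∧
      TendstoUniformlyOn (fun k => U (φ k)) uinf atTop (Icc a b) ∧
      (∀ i, i ≤ m → ∀ t ∈ Icc (τ i) (σ (i + 1)), uinf t = 0) ∧
      (∀ i, 1 ≤ i → i ≤ m → IsNonnegDirichletSol (σ i) (τ i) (posW h) g uinf) ∧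
      -- the refinement when all the solutions lie in `Λ^𝓘`:
      (∀ (r : ℝ) (𝓘 : Finset ℕ), 0 < r → r < R →
        (∀ i, 1 ≤ i → i ≤ m → ∀ v : ℝ → ℝ,
          IsNonnegDirichletSol (σ i) (τ i) (posW h) g v →
          (∀ t ∈ Icc (σ i) (τ i), v t ≤ r) →
          ∀ t ∈ Icc (σ i) (τ i), v t = 0) →
        𝓘.Nonempty → 𝓘 ⊆ Finset.Icc 1 m →
        (∀ n, U n ∈ LambdaSet a b m σ τ r R 𝓘) →
        (∀ i ∈ Finset.Icc 1 m \ 𝓘, ∀ t ∈ Icc (σ i) (τ i), uinf t = 0) ∧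
        (∀ i ∈ 𝓘, IsPosDirichletSol (σ i) (τ i) (posW h) g uinf)) := by
  have hg : Continuous g := continuous_of_continuousOn_Ici_of_eq_zero hg_cont hg_ext
  have hg0 : ∀ s, 0 ≤ g s := fun s => by
    rcases le_or_gt s 0 with h1 | h1
    · exact (hg_ext s h1).ge
    · exact (hg_pos s h1).le
  obtain ⟨M, hM⟩ := isCompact_Icc.exists_bound_of_continuousOn (hg.continuousOn (s := Icc 0 R))
  have hnonneg : ∀ n, ∀ t ∈ Icc a b, 0 ≤ U n t := by
    intro n t ht
    rcases ht.1.eq_or_lt with rfl | h1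
    · exact (hU n).1.2.1.ge
    rcases ht.2.eq_or_lt with rfl | h2
    · exact (hU n).1.2.2.ge
    · exact ((hU n).2 t ⟨h1, h2⟩).le
  have hrange : ∀ n, ∀ t ∈ Icc a b, 0 ≤ U n t ∧ U n t ≤ R := fun n t ht =>
    ⟨hnonneg n t ht, ((abs_lt.1 (hbound _ (hμseq n) _ (hU n) t ht)).2).le⟩
  choose U' hd hac hae using fun n => (hU n).1.1
  have heq : ∀ n s t, a ≤ s → s ≤ t → t ≤ b →
      U' n t - U' n s = -∫ x in s..t, muW h (μseq n) x * g (U n x) :=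
    fun n s t h1 h2 h3 => deriv_sub_eq_neg_integral (hac n) (hae n) h1 h2 h3
  have hμ0 : ∀ n, 0 ≤ μseq n := fun n => (hμstar.trans (hμseq n)).le
  obtain ⟨K, hK⟩ : ∃ K, ∀ n, ∀ t ∈ Icc a b, |U' n t| ≤ K :=
    ⟨_, fun n => abs_deriv_le_of_signCondition hab hh_sign hh_int hg0 hR.le hM (hμ0 n)
      (hd n) (heq n) (hrange n) (hU n).1.2.1 (hU n).1.2.2⟩
  have hcont : ∀ n, ContinuousOn (U n) (Icc a b) :=
    fun n t ht => (hd n t ht).continuousWithinAt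
  have hlip : ∀ n, LipschitzOnWith K.toNNReal (U n) (Icc a b) := fun n =>
    (convex_Icc a b).lipschitzOnWith_of_nnnorm_hasDerivWithin_le (hd n) fun t ht =>
      NNReal.le_toNNReal_of_coe_le (hK n t ht)
  obtain ⟨φ, hφ, v, hvcont, hlim⟩ := exists_subseq_tendstoUniformlyOn_of_lipschitz hab.le hlip
    (R := R) fun n t ht => (hbound _ (hμseq n) _ (hU n) t ht).le
  have hμφ : Tendsto (fun k => μseq (φ k)) atTop atTop := hμ_tendsto.comp hφ.tendsto_atTop
  have hv0 : ∀ t ∈ Icc a b, 0 ≤ v t := fun t ht =>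
    ge_of_tendsto' (hlim.tendsto_at ht) fun k => hnonneg _ t ht
  have ham : a ∈ Icc a b := left_mem_Icc.2 hab.le
  have hbm : b ∈ Icc a b := right_mem_Icc.2 hab.le
  have hva : v a = 0 := tendsto_nhds_unique (hlim.tendsto_at ham) (by
    simp only [(hU _).1.2.1, tendsto_const_nhds_iff])
  have hvb : v b = 0 := tendsto_nhds_unique (hlim.tendsto_at hbm) (by
    simp only [(hU _).1.2.2, tendsto_const_nhds_iff])
  -- a short interval of negativity on which the limit stays away from zero is impossible
  have hblow : ∀ i ≤ m, ∀ c d, τ i ≤ c → c ≤ d → d ≤ σ (i + 1) → ¬ VanishesOn h (Icc c d) →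
      ∀ ε > 0, ¬ ∀ t ∈ Icc c d, 2 * ε ≤ v t := by
    intro i hi c d hc hcd hd' hnt ε hε hvε
    have hsub : Icc c d ⊆ Icc (τ i) (σ (i + 1)) := Icc_subset_Icc hc hd'
    have hsub' : Icc c d ⊆ Icc a b := hsub.trans
      (Icc_subset_Icc (hh_sign.left_le_tau i hi) (hh_sign.sigma_le_right hi))
    exact false_of_limit_pos hcd (hh_int.mono_set hsub') hg hg_pos
      (ae_restrict_of_ae_restrict_of_subset hsub (hh_sign.nonpos i hi)) hnt hμφ
      (fun k => (hcont (φ k)).mono hsub') (fun k t ht => (hrange (φ k) t (hsub' ht)).2)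
      (fun k t ht => hK (φ k) t (hsub' ht))
      (fun k => deriv_sub_eq_of_nonpos (heq (φ k)) (hh_sign.left_le_tau i hi)
        (hh_sign.sigma_le_right hi) (hh_sign.nonpos i hi) hc hcd hd')
      (hlim.mono hsub') hε hvε
  have hvτ : ∀ i ≤ m, v (τ i) = 0 := by
    intro i hi
    rcases Nat.eq_zero_or_pos i with rfl | h1
    · rw [hh_sign.left_end, hva]
    have hmem : τ i ∈ Icc a b := ⟨hh_sign.left_le_tau i hi, hh_sign.tau_le_right hi⟩
    rcases hmem.2.eq_or_lt with h2 | h2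
    · rw [h2, hvb]
    by_contra hne
    have hpos : 0 < v (τ i) := lt_of_le_of_ne (hv0 _ hmem) (Ne.symm hne)
    have hlt := hh_sign.neg_lt_of_lt_right h1 hi h2
    have hev := (hvcont _ hmem).eventually (lt_mem_nhds (half_lt_self hpos))
    rw [eventually_nhdsWithin_iff, Metric.eventually_nhds_iff] at hev
    obtain ⟨δ, hδ, hball⟩ := hev
    set ρ := min (δ / 2) (σ (i + 1) - τ i) with hρ
    have hρ0 : 0 < ρ := lt_min (half_pos hδ) (sub_pos.2 hlt)
    have hρδ : ρ < δ := (min_le_left _ _).trans_lt (half_lt_self hδ)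
    have hρσ : τ i + ρ ≤ σ (i + 1) := by linarith [min_le_right (δ / 2) (σ (i + 1) - τ i)]
    have hsub : Icc (τ i) (τ i + ρ) ⊆ Icc a b :=
      Icc_subset_Icc hmem.1 (hρσ.trans (hh_sign.sigma_le_right hi))
    have hnt := hh_sign.right_nhds i h1 hi h2 ρ hρ0
    rw [inter_eq_left.2 hsub] at hnt
    refine hblow i hi _ _ le_rfl (by linarith) hρσ hnt (v (τ i) / 4) (by linarith) fun t ht => ?_
    have h3 : v (τ i) / 2 < v t := hball (by
      rw [Real.dist_eq, abs_lt]
      constructor <;> linarith [ht.1, ht.2]) (hsub ht)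
    linarith
  have hvσ : ∀ i ≤ m, v (σ (i + 1)) = 0 := by
    intro i hi
    rcases hi.eq_or_lt with rfl | h1
    · rw [hh_sign.right_end, hvb]
    have hmem : σ (i + 1) ∈ Icc a b := ⟨hh_sign.left_le_sigma hi, hh_sign.sigma_le_right hi⟩
    rcases hmem.1.eq_or_lt with h2 | h2
    · rw [← h2, hva]
    by_contra hne
    have hpos : 0 < v (σ (i + 1)) := lt_of_le_of_ne (hv0 _ hmem) (Ne.symm hne)
    have hlt := hh_sign.neg_lt_of_left_lt h1 h2
    have hev := (hvcont _ hmem).eventually (lt_mem_nhds (half_lt_self hpos))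
    rw [eventually_nhdsWithin_iff, Metric.eventually_nhds_iff] at hev
    obtain ⟨δ, hδ, hball⟩ := hev
    set ρ := min (δ / 2) (σ (i + 1) - τ i) with hρ
    have hρ0 : 0 < ρ := lt_min (half_pos hδ) (sub_pos.2 hlt)
    have hρδ : ρ < δ := (min_le_left _ _).trans_lt (half_lt_self hδ)
    have hρτ : τ i ≤ σ (i + 1) - ρ := by linarith [min_le_right (δ / 2) (σ (i + 1) - τ i)]
    have hsub : Icc (σ (i + 1) - ρ) (σ (i + 1)) ⊆ Icc a b :=
      Icc_subset_Icc ((hh_sign.left_le_tau i hi).trans hρτ) hmem.2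
    have hnt := hh_sign.left_nhds (i + 1) (by omega) h1 h2 ρ hρ0
    rw [inter_eq_left.2 hsub] at hnt
    refine hblow i hi _ _ hρτ (by linarith) le_rfl hnt (v (σ (i + 1)) / 4) (by linarith)
      fun t ht => ?_
    have h3 : v (σ (i + 1)) / 2 < v t := hball (by
      rw [Real.dist_eq, abs_lt]
      constructor <;> linarith [ht.1, ht.2]) (hsub ht)
    linarith
  have hneg : ∀ i, i ≤ m → ∀ t ∈ Icc (τ i) (σ (i + 1)), v t = 0 := by
    intro i hi t ht
    have hle := hh_sign.neg_le hi
    have hsub : Icc (τ i) (σ (i + 1)) ⊆ Icc a b :=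
      Icc_subset_Icc (hh_sign.left_le_tau i hi) (hh_sign.sigma_le_right hi)
    refine le_antisymm ?_ (hv0 t (hsub ht))
    have hmax := (hlim.tendsto_at (hsub (left_mem_Icc.2 hle))).max
      (hlim.tendsto_at (hsub (right_mem_Icc.2 hle)))
    rw [hvτ i hi, hvσ i hi, max_self] at hmax
    refine le_of_tendsto_of_tendsto' (hlim.tendsto_at (hsub ht)) hmax fun k => ?_
    have hconv : ConvexOn ℝ (Icc (τ i) (σ (i + 1))) (U (φ k)) :=
      convexOn_Icc_of_monotoneOn_deriv (fun x hx => (hd (φ k) x (hsub hx)).mono hsub)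
        fun x hx y hy hxy => by
          have h2 := deriv_sub_eq_of_nonpos (heq (φ k)) (hh_sign.left_le_tau i hi)
            (hh_sign.sigma_le_right hi) (hh_sign.nonpos i hi) hx.1 hxy hy.2
          have h3 := mul_nonneg (hμ0 (φ k)) (intervalIntegral.integral_nonneg
            (f := fun x => negW h x * g (U (φ k) x)) (μ := volume) hxy
            fun z _ => mul_nonneg (negW_nonneg h z) (hg0 _))
          linarith
    exact hconv.le_max_of_mem_Icc (left_mem_Icc.2 hle) (right_mem_Icc.2 hle) ht
  have hsubpos : ∀ i, 1 ≤ i → i ≤ m → Icc (σ i) (τ i) ⊆ Icc a b := fun i h1 hi =>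
    Icc_subset_Icc (hh_sign.left_le_sigma' h1 hi) (hh_sign.tau_le_right hi)
  have hpos : ∀ i, 1 ≤ i → i ≤ m → IsNonnegDirichletSol (σ i) (τ i) (posW h) g v := by
    intro i h1 hi
    have hsub := hsubpos i h1 hi
    refine ⟨⟨?_, ?_, hvτ i hi⟩, fun t ht => hv0 t (hsub ht)⟩
    · exact isCaratheodorySol_of_tendstoUniformlyOn (hh_sign.pos_lt i h1 hi)
        (integrableOn_posW (hh_int.mono_set hsub)) hg
        (fun k t ht => (hd (φ k) t (hsub ht)).mono hsub) (fun k t ht => hrange (φ k) t (hsub ht))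
        (fun k t ht => hK (φ k) t (hsub ht))
        (fun k t ht => deriv_sub_eq_of_nonneg (heq (φ k)) (hh_sign.left_le_sigma' h1 hi)
          (hh_sign.tau_le_right hi) (hh_sign.nonneg i h1 hi) le_rfl ht.1 ht.2)
        (hlim.mono hsub)
    · obtain ⟨j, rfl⟩ := Nat.exists_eq_add_of_le' h1
      exact hvσ j (by omega)
  refine ⟨φ, hφ, v, hvcont, hv0, hlim, hneg, hpos, ?_⟩
  intro r 𝓘 hr _ huniq _ h𝓘 hΛ
  refine ⟨fun i hi => ?_, fun i hi => ?_⟩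
  · obtain ⟨h1, hm⟩ := Finset.mem_Icc.1 (Finset.mem_sdiff.1 hi).1
    refine huniq i h1 hm v (hpos i h1 hm) fun t ht => ?_
    refine le_of_tendsto' (hlim.tendsto_at (hsubpos i h1 hm ht)) fun k => ?_
    have hbdd : BddAbove ((fun t => |U (φ k) t|) '' Icc (σ i) (τ i)) :=
      isCompact_Icc.bddAbove_image ((hcont (φ k)).mono (hsubpos i h1 hm)).abs
    exact (le_abs_self _).trans ((le_csSup hbdd (mem_image_of_mem _ ht)).trans
      ((hΛ (φ k)).2.2 i hi).le)
  · obtain ⟨h1, hm⟩ := Finset.mem_Icc.1 (h𝓘 hi)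
    have hsol := hpos i h1 hm
    refine ⟨hsol.1, fun t ht => ?_⟩
    by_contra hnpos
    have hzero : v t = 0 :=
      le_antisymm (not_lt.1 hnpos) (hsol.2 t (Ioo_subset_Icc_self ht))
    have hvz := (hsol.1.1.concaveOn (posW_nonneg h) hg0).eq_zero_of_nonneg hsol.2 ht hzero
    obtain ⟨k, hk⟩ := (Metric.tendstoUniformlyOn_iff.1 hlim r hr).exists
    refine (((hΛ (φ k)).2.1 i hi).1).not_ge ?_
    refine csSup_le ((nonempty_Icc.2 (hh_sign.pos_lt i h1 hm).le).image _) ?_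
    rintro _ ⟨x, hx, rfl⟩
    have h3 := hk x (hsubpos i h1 hm hx)
    rw [hvz x hx, dist_comm, Real.dist_eq, sub_zero] at h3
    exact h3.le
end
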